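/- arXiv:2206.02576 — 5 statements merged into one kernel-verified Lean document; each statement's English description precedes it below -/
import Mathlib

section
/- Let G be a directed graph and A, B sets of vertices. If F is a strongly maximal family of pairwise vertex-disjoint A–B paths (i.e., for every family L of pairwise vertex-disjoint A–B paths, |L \ F| ≤ |F \ L|), then there exists an A–B separating set S of vertices such that every path in F contains precisely one vertex of S and every vertex of S lies on some path of F. -/
/-!
A separator as wanted is the range on `F` of a function `c` that chooses a vertex `c p` on every
path `p`, such that every `A`–`B` path `q` contains `c p` for some `p ∈ F`. Since paths are finite,
the choice functions form a compact space. Only finitely many paths of the disjoint family `F` meet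
a given `q`, so the condition imposed by `q` is closed, and by compactness it suffices to satisfy
the conditions of finitely many `A`–`B` paths at a time (`exists_finite_choice`).

For a finite set `Q` of `A`–`B` paths, let `F'` be the finite set of those paths of `F` that
meet `Q`, and consider the finite subgraph induced on the vertices of `F' ∪ Q`. It is disjoint from
the paths in `F \ F'`, so a disjoint family of more than `|F'|` paths in it could replace `F'`
in `F`, contradicting strong maximality. By Menger's theorem some set of at most `|F'|` vertices
separates `A` from `B` in this subgraph. It has exactly one vertex on each path of `F'` and no
others, and it meets every path of `Q`.

Menger's theorem (`exists_disjoint_walks`) is proved by Göring's induction on the edge set. It is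
stated for walks, so that gluing needs no care about repeated vertices; `IsWalk.exists_isABPath`
shortens walks to `A`–`B` paths.
-/

open Cardinal

/-- A (finite) directed path in a possibly infinite directed graph given by the
edge relation `E`: a nonempty list of distinct vertices, consecutive ones joined
by directed edges. -/
structure DiPath (V : Type*) (E : V → V → Prop) where
  verts : List V
  ne : verts ≠ []
  nodup : verts.Nodup
  chain : verts.Chain' E

/-- `p` is an `A`–`B` path: its first vertex lies in `A`, its last vertex lies in `B`,
and its internal vertices lie outside `A ∪ B`. -/
def DiPath.IsABPath {V : Type*} {E : V → V → Prop} (A B : Set V) (p : DiPath V E) : Prop :=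
  p.verts.head p.ne ∈ A ∧ p.verts.getLast p.ne ∈ B ∧
    ∀ v ∈ p.verts.tail.dropLast, v ∉ A ∪ B

/-- `S` is an `A`–`B` separating set: every `A`–`B` path contains a vertex of `S`. -/
def Separates {V : Type*} (E : V → V → Prop) (A B S : Set V) : Prop :=
  ∀ p : DiPath V E, p.IsABPath A B → ∃ v ∈ S, v ∈ p.verts

/-- A family of paths is (pairwise) vertex-disjoint. -/
def DisjointFamily {V : Type*} {E : V → V → Prop} (F : Set (DiPath V E)) : Prop :=
  F.Pairwise fun p q => ∀ v, v ∈ p.verts → v ∉ q.verts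

/-! ### Walks -/

section Linkage

variable {V : Type*}

/-- `l` is an `R`-walk (repetitions allowed) from a vertex of `A` to a vertex of `B`. -/
def IsWalk (R : V → V → Prop) (A B : Set V) (l : List V) : Prop :=
  l.IsChain R ∧ (∃ a ∈ l.head?, a ∈ A) ∧ ∃ b ∈ l.getLast?, b ∈ B

theorem IsWalk.mono {R R' : V → V → Prop} {A A' B B' : Set V} {l : List V}
    (h : IsWalk R A B l) (hR : ∀ u v, R u v → R' u v) (hA : A ⊆ A') (hB : B ⊆ B') :
    IsWalk R' A' B' l := by
  obtain ⟨h1, ⟨a, h2, h3⟩, b, h4, h5⟩ := h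
  exact ⟨h1.imp hR, ⟨a, h2, hA h3⟩, b, h4, hB h5⟩

theorem IsWalk.reverse {R : V → V → Prop} {A B : Set V} {l : List V}
    (h : IsWalk R A B l) : IsWalk (flip R) B A l.reverse := by
  obtain ⟨h1, h2, h3⟩ := h
  refine ⟨?_, ?_, ?_⟩
  · rw [List.isChain_reverse]; exact h1
  · simpa using h3
  · simpa using h2

theorem IsWalk.pre {R : V → V → Prop} {A B C : Set V} {l₁ l₂ : List V} {v : V}
    (h : IsWalk R A B (l₁ ++ v :: l₂)) (hv : v ∈ C) : IsWalk R A C (l₁ ++ [v]) := by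
  obtain ⟨h1, h2, -⟩ := h
  refine ⟨(List.isChain_split.1 h1).1, ?_, v, by simp, hv⟩
  cases l₁ <;> simpa using h2

theorem IsWalk.suf {R : V → V → Prop} {A B C : Set V} {l₁ l₂ : List V} {v : V}
    (h : IsWalk R A B (l₁ ++ v :: l₂)) (hv : v ∈ C) : IsWalk R C B (v :: l₂) := by
  obtain ⟨h1, -, h2⟩ := h
  refine ⟨(List.isChain_split.1 h1).2, ⟨v, by simp, hv⟩, ?_⟩
  simpa [List.getLast?_append] using h2

theorem IsWalk.join {R : V → V → Prop} {A B C C' : Set V} {l₁ l₂ : List V} {v : V}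
    (h : IsWalk R A C (l₁ ++ [v])) (h' : IsWalk R C' B (v :: l₂)) :
    IsWalk R A B (l₁ ++ v :: l₂) := by
  obtain ⟨h1, h2, -⟩ := h
  obtain ⟨h3, -, h4⟩ := h'
  refine ⟨List.isChain_split.2 ⟨h1, h3⟩, ?_, ?_⟩
  · cases l₁ <;> simpa using h2
  · simpa [List.getLast?_append] using h4

theorem IsWalk.join_edge {R : V → V → Prop} {A B C C' : Set V} {l₁ l₂ : List V} {x y : V}
    (h : IsWalk R A C (l₁ ++ [x])) (h' : IsWalk R C' B (y :: l₂)) (hxy : R x y) :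
    IsWalk R A B (l₁ ++ x :: y :: l₂) := by
  have hx : IsWalk R {x} B (x :: y :: l₂) := by
    obtain ⟨h3, -, h4⟩ := h'
    refine ⟨by simp [hxy, h3], ⟨x, by simp, rfl⟩, ?_⟩
    simpa [List.getLast?_cons] using h4
  exact h.join hx

theorem exists_first_hit (T : Set V) : ∀ l : List V, (∃ v ∈ l, v ∈ T) →
    ∃ l₁ v l₂, l = l₁ ++ v :: l₂ ∧ v ∈ T ∧ ∀ u ∈ l₁, u ∉ T
  | [], h => by simp at h
  | a :: l, h => by
    by_cases ha : a ∈ T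
    · exact ⟨[], a, l, rfl, ha, by simp⟩
    · obtain ⟨l₁, v, l₂, rfl, hv, hl⟩ := exists_first_hit T l (by simpa [ha] using h)
      exact ⟨a :: l₁, v, l₂, rfl, hv, by simpa [ha] using hl⟩

theorem exists_last_hit (T : Set V) (l : List V) (h : ∃ v ∈ l, v ∈ T) :
    ∃ l₁ v l₂, l = l₁ ++ v :: l₂ ∧ v ∈ T ∧ ∀ u ∈ l₂, u ∉ T := by
  obtain ⟨l₁, v, l₂, hl, hv, hu⟩ := exists_first_hit T l.reverse (by simpa using h)
  refine ⟨l₂.reverse, v, l₁.reverse, ?_, hv, by simpa using hu⟩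
  have := congrArg List.reverse hl
  simpa using this

theorem exists_repeat_of_not_nodup : ∀ l : List V, ¬ l.Nodup →
    ∃ l₁ v l₂ l₃, l = l₁ ++ v :: (l₂ ++ v :: l₃)
  | [], h => by simp at h
  | a :: l, h => by
    by_cases ha : a ∈ l
    · obtain ⟨s, t, rfl⟩ := List.append_of_mem ha
      exact ⟨[], a, s, t, rfl⟩
    · obtain ⟨l₁, v, l₂, l₃, rfl⟩ := exists_repeat_of_not_nodup l
        (fun hl => h (List.nodup_cons.2 ⟨ha, hl⟩))
      exact ⟨a :: l₁, v, l₂, l₃, rfl⟩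

/-- A shortest walk on the vertices of `l` is an `A`–`B` path. -/
theorem IsWalk.exists_isABPath {E : V → V → Prop} {A B : Set V} (n : ℕ) :
    ∀ l : List V, l.length = n → IsWalk E A B l →
    ∃ p : DiPath V E, p.IsABPath A B ∧ ∀ v ∈ p.verts, v ∈ l := by
  induction n using Nat.strong_induction_on with
  | _ n ih =>
  intro l hn hl
  have key : ∀ l' : List V, l'.length < l.length → IsWalk E A B l' → (∀ v ∈ l', v ∈ l) →
      ∃ p : DiPath V E, p.IsABPath A B ∧ ∀ v ∈ p.verts, v ∈ l := by
    intro l' h1 h2 h3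
    obtain ⟨p, hp, hpl⟩ := ih _ (hn ▸ h1) l' rfl h2
    exact ⟨p, hp, fun v hv => h3 v (hpl v hv)⟩
  by_cases hnd : l.Nodup
  · have hne : l ≠ [] := by
      rintro rfl
      obtain ⟨-, ⟨a, ha, -⟩, -⟩ := hl
      simp at ha
    by_cases hint : ∀ v ∈ l.tail.dropLast, v ∉ A ∪ B
    · refine ⟨⟨l, hne, hnd, hl.1⟩, ⟨?_, ?_, hint⟩, fun v hv => hv⟩
      · obtain ⟨-, ⟨a, ha, haA⟩, -⟩ := hl
        rw [List.head?_eq_some_head hne] at ha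
        simp at ha
        exact ha ▸ haA
      · obtain ⟨-, -, b, hb, hbB⟩ := hl
        rw [List.getLast?_eq_some_getLast hne] at hb
        simp at hb
        exact hb ▸ hbB
    · push Not at hint
      obtain ⟨v, hv, hvAB⟩ := hint
      -- An internal vertex in `A` or `B` allows for cutting off an end of the walk.
      obtain ⟨a, m, b, rfl⟩ : ∃ a m b, l = a :: (m ++ [b]) := by
        cases l with
        | nil => simp at hne
        | cons a l =>
          rcases List.eq_nil_or_concat l with rfl | ⟨m, b, rfl⟩
          · simp at hv
          · exact ⟨a, m, b, by simp⟩
      simp only [List.tail_cons, List.dropLast_concat] at hv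
      obtain ⟨s, t, rfl⟩ := List.append_of_mem hv
      have hl' : IsWalk E A B ((a :: s) ++ v :: (t ++ [b])) := by simpa using hl
      rcases hvAB with hA | hB
      · exact key _ (by simp) (hl'.suf hA) (by simp; grind)
      · exact key _ (by simp) (hl'.pre hB) (by simp; grind)
  · obtain ⟨l₁, v, l₂, l₃, rfl⟩ := exists_repeat_of_not_nodup l hnd
    have h1 : IsWalk E A {v} (l₁ ++ [v]) := hl.pre rfl
    have h2 : IsWalk E {v} B (v :: l₃) := by
      have : IsWalk E {v} B ((v :: l₂) ++ v :: l₃) := by simpa using hl.suf (C := {v}) rfl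
      exact this.suf rfl
    exact key _ (by simp) (h1.join h2) (by simp; grind)

/-- Disjoint walks from `A` to a set `T` of the same size, cut at their first vertex in `T`,
can be indexed by their last vertices. -/
theorem exists_walks_indexed {R : V → V → Prop} {A : Set V} {T : Finset V} {k : ℕ}
    (hT : T.card = k) (P : Fin k → List V) (hP : ∀ i, IsWalk R A T (P i))
    (hd : ∀ i j, i ≠ j → ∀ v ∈ P i, v ∉ P j) :
    ∃ p : V → List V, (∀ t ∈ T, IsWalk R A T (p t ++ [t]) ∧ ∀ u ∈ p t, u ∉ T) ∧
      ∀ t ∈ T, ∀ t' ∈ T, t ≠ t' → ∀ v ∈ p t ++ [t], v ∉ p t' ++ [t'] := by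
  classical
  have h : ∀ i, ∃ l₁ v l₂, P i = l₁ ++ v :: l₂ ∧ v ∈ (T : Set V) ∧ ∀ u ∈ l₁, u ∉ (T : Set V) := by
    intro i
    obtain ⟨-, -, b, hb, hbT⟩ := hP i
    exact exists_first_hit _ _ ⟨b, List.mem_of_getLast? hb, hbT⟩
  choose l₁ v l₂ hl hv hu using h
  have hinj : Function.Injective (fun i => (⟨v i, hv i⟩ : T)) := by
    intro i j hij
    by_contra hne
    have hij' : v i = v j := congrArg Subtype.val hij
    exact hd i j hne (v i) (by simp [hl i]) (by rw [hl j, hij']; simp)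
  have hbij := (Fintype.bijective_iff_injective_and_card (fun i => (⟨v i, hv i⟩ : T))).2
    ⟨hinj, by simp [hT]⟩
  have hs : ∀ t : V, ∃ i : List V, t ∈ T → ∃ j, v j = t ∧ l₁ j = i := by
    intro t
    by_cases ht : t ∈ T
    · obtain ⟨i, hi⟩ := hbij.2 ⟨t, ht⟩
      exact ⟨l₁ i, fun _ => ⟨i, congrArg Subtype.val hi, rfl⟩⟩
    · exact ⟨[], fun h => absurd h ht⟩
  choose p hp using hs
  refine ⟨p, ?_, ?_⟩
  · intro t ht
    obtain ⟨j, rfl, hj⟩ := hp t ht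
    rw [← hj]
    exact ⟨((hl j) ▸ hP j : IsWalk R A T (l₁ j ++ v j :: l₂ j)).pre (hv j), hu j⟩
  · intro t ht t' ht' hne w hw hw'
    obtain ⟨j, rfl, hj⟩ := hp t ht
    obtain ⟨j', rfl, hj'⟩ := hp t' ht'
    rw [← hj] at hw
    rw [← hj'] at hw'
    refine hd j j' (fun h => hne (h ▸ rfl)) w ?_ ?_
    · rw [hl j]; simp at hw ⊢; tauto
    · rw [hl j']; simp at hw' ⊢; tauto

/-- The mirror image of `exists_walks_indexed`. -/
theorem exists_walks_indexed' {R : V → V → Prop} {B : Set V} {T : Finset V} {k : ℕ}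
    (hT : T.card = k) (P : Fin k → List V) (hP : ∀ i, IsWalk R T B (P i))
    (hd : ∀ i j, i ≠ j → ∀ v ∈ P i, v ∉ P j) :
    ∃ q : V → List V, (∀ t ∈ T, IsWalk R T B (t :: q t) ∧ ∀ u ∈ q t, u ∉ T) ∧
      ∀ t ∈ T, ∀ t' ∈ T, t ≠ t' → ∀ v ∈ t :: q t, v ∉ t' :: q t' := by
  obtain ⟨p, hp, hpd⟩ := exists_walks_indexed hT (fun i => (P i).reverse)
    (fun i => (hP i).reverse) (by simpa using hd)
  refine ⟨fun t => (p t).reverse, fun t ht => ⟨?_, by simpa using (hp t ht).2⟩, ?_⟩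
  · simpa using (hp t ht).1.reverse
  · intro t ht t' ht' hne v hv hv'
    refine hpd t ht t' ht' hne v ?_ ?_
    · simp at hv ⊢; tauto
    · simp at hv' ⊢; tauto

/-- A walk in `D + xy` without `x`, except possibly as its last vertex, is a walk in `D`. -/
theorem chain_of_not_mem_left [DecidableEq V] {D : Finset (V × V)} {x y t : V} :
    ∀ {l : List V}, x ∉ l → (l ++ [t]).IsChain (fun u v => (u, v) ∈ insert (x, y) D) →
    (l ++ [t]).IsChain (fun u v => (u, v) ∈ D)
  | [], _, _ => by simp
  | [a], h, h' => by
    simp at h h' ⊢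
    grind
  | a :: b :: l, h, h' => by
    have := chain_of_not_mem_left (D := D) (x := x) (y := y) (t := t) (l := b :: l) (by grind)
      (by simp at h' ⊢; exact h'.2)
    simp at h h' this ⊢
    grind

theorem chain_of_not_mem_right [DecidableEq V] {D : Finset (V × V)} {x y : V} :
    ∀ {l : List V} {t : V}, y ∉ l → (t :: l).IsChain (fun u v => (u, v) ∈ insert (x, y) D) →
    (t :: l).IsChain (fun u v => (u, v) ∈ D)
  | [], t, _, _ => by simp
  | a :: l, t, h, h' => by
    have := chain_of_not_mem_right (D := D) (x := x) (y := y) (t := a) (l := l) (by grind)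
      (by simp at h' ⊢; exact h'.2)
    simp only [List.isChain_cons_cons] at h h' this ⊢
    grind

theorem chain_or_mem [DecidableEq V] {D : Finset (V × V)} {x y : V} :
    ∀ {l : List V}, l.IsChain (fun u v => (u, v) ∈ insert (x, y) D) →
    l.IsChain (fun u v => (u, v) ∈ D) ∨ (x ∈ l ∧ y ∈ l)
  | [], _ => by simp
  | [a], _ => by simp
  | a :: b :: l, h => by
    have := chain_or_mem (D := D) (x := x) (y := y) (l := b :: l) (by simp at h ⊢; exact h.2)
    simp only [List.isChain_cons_cons] at h this ⊢
    grind

/-! ### Menger's theorem for finite edge sets -/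

/-- Menger's theorem for a finite edge set `D`, in the form of walks: if no set of fewer than `k`
vertices meets all walks from `A` to `B`, there are `k` disjoint such walks. The proof is Göring's
induction on `D`. -/
theorem exists_disjoint_walks [DecidableEq V] (D : Finset (V × V)) :
    ∀ (A B : Finset V) (k : ℕ),
    (∀ S : Finset V, (∀ l, IsWalk (fun u v => (u, v) ∈ D) A B l → ∃ v ∈ l, v ∈ S) → k ≤ S.card) →
    ∃ P : Fin k → List V, (∀ i, IsWalk (fun u v => (u, v) ∈ D) A B (P i)) ∧
      ∀ i j, i ≠ j → ∀ v ∈ P i, v ∉ P j := by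
  induction D using Finset.induction_on with
  | empty =>
    intro A B k hk
    -- Without edges every walk is a single vertex of `A ∩ B`.
    have h := hk (A ∩ B) (by
      rintro l ⟨h1, ⟨a, ha, haA⟩, b, hb, hbB⟩
      match l, h1 with
      | [], _ => simp at ha
      | [c], _ =>
        simp at ha hb
        subst ha; subst hb
        exact ⟨_, by simp, Finset.mem_inter.2 ⟨haA, hbB⟩⟩
      | c :: d :: l, h1 => simp at h1)
    obtain ⟨T, hT, hTk⟩ := Finset.exists_subset_card_eq h
    let e := (T.equivFinOfCardEq hTk).symm
    refine ⟨fun i => [(e i : V)], fun i => ?_, fun i j hij v hv hv' => ?_⟩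
    · have := hT (e i).2
      rw [Finset.mem_inter] at this
      exact ⟨by simp, ⟨_, by simp, this.1⟩, _, by simp, this.2⟩
    · simp at hv hv'
      exact hij (e.injective (Subtype.ext (hv.symm.trans hv')))
  | insert d D _ ih =>
    obtain ⟨x, y⟩ := d
    intro A B k hk
    have hsub : ∀ u v, (u, v) ∈ D → (u, v) ∈ insert (x, y) D :=
      fun u v h => Finset.mem_insert_of_mem h
    by_cases hD : ∀ S : Finset V,
        (∀ l, IsWalk (fun u v => (u, v) ∈ D) A B l → ∃ v ∈ l, v ∈ S) → k ≤ S.card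
    · obtain ⟨P, hP, hd⟩ := ih A B k hD
      exact ⟨P, fun i => (hP i).mono hsub subset_rfl subset_rfl, hd⟩
    · push Not at hD
      obtain ⟨S, hS, hSk⟩ := hD
      -- `S` together with either end of the removed edge separates in `D + xy`.
      have hsx : ∀ l, IsWalk (fun u v => (u, v) ∈ insert (x, y) D) A B l →
          ∃ v ∈ l, v ∈ insert x S := by
        intro l hl
        rcases chain_or_mem hl.1 with h | h
        · obtain ⟨v, hv, hvS⟩ := hS l ⟨h, hl.2⟩
          exact ⟨v, hv, Finset.mem_insert_of_mem hvS⟩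
        · exact ⟨x, h.1, Finset.mem_insert_self _ _⟩
      have hsy : ∀ l, IsWalk (fun u v => (u, v) ∈ insert (x, y) D) A B l →
          ∃ v ∈ l, v ∈ insert y S := by
        intro l hl
        rcases chain_or_mem hl.1 with h | h
        · obtain ⟨v, hv, hvS⟩ := hS l ⟨h, hl.2⟩
          exact ⟨v, hv, Finset.mem_insert_of_mem hvS⟩
        · exact ⟨y, h.2, Finset.mem_insert_self _ _⟩
      have hcx : (insert x S).card = k :=
        le_antisymm ((Finset.card_insert_le _ _).trans hSk) (hk _ hsx)
      have hcy : (insert y S).card = k :=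
        le_antisymm ((Finset.card_insert_le _ _).trans hSk) (hk _ hsy)
      have hxS : x ∉ S := fun h => by rw [Finset.insert_eq_of_mem h] at hcx; omega
      have hyS : y ∉ S := fun h => by rw [Finset.insert_eq_of_mem h] at hcy; omega
      obtain ⟨P, hP, hPd⟩ := ih A (insert x S) k (by
        intro X hX
        refine hk X fun l hl => ?_
        obtain ⟨l₁, v, l₂, rfl, hv, hu⟩ := exists_first_hit (insert x S : Finset V) l (hsx l hl)
        have hw := hl.pre hv
        obtain ⟨w, hw, hwX⟩ := hX _ ⟨chain_of_not_mem_left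
          (fun h => hu x h (Finset.mem_insert_self _ _)) hw.1, hw.2⟩
        exact ⟨w, by simp at hw ⊢; tauto, hwX⟩)
      obtain ⟨Q, hQ, hQd⟩ := ih (insert y S) B k (by
        intro X hX
        refine hk X fun l hl => ?_
        obtain ⟨l₁, v, l₂, rfl, hv, hu⟩ := exists_last_hit (insert y S : Finset V) l (hsy l hl)
        have hw := hl.suf hv
        obtain ⟨w, hw, hwX⟩ := hX _ ⟨chain_of_not_mem_right
          (fun h => hu y h (Finset.mem_insert_self _ _)) hw.1, hw.2⟩
        exact ⟨w, by simp at hw ⊢; tauto, hwX⟩)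
      obtain ⟨p, hp, hpd⟩ := exists_walks_indexed hcx P hP hPd
      obtain ⟨q, hq, hqd⟩ := exists_walks_indexed' hcy Q hQ hQd
      -- The two systems of walks meet only in `S`, since `S` separates in `D`.
      have hmeet : ∀ s ∈ insert x S, ∀ t ∈ insert y S, ∀ v ∈ p s ++ [s], v ∈ t :: q t →
          s = t ∧ s ∈ S := by
        intro s hs t ht v hv hv'
        have hpS : ∀ u ∈ p s, u ∉ S := fun u hu h =>
          (hp s hs).2 u hu (Finset.mem_insert_of_mem h)
        have hqS : ∀ u ∈ q t, u ∉ S := fun u hu h =>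
          (hq t ht).2 u hu (Finset.mem_insert_of_mem h)
        have hvS : v ∈ S := by
          by_contra hvS
          obtain ⟨a, b, hab⟩ := List.append_of_mem hv
          obtain ⟨c, d, hcd⟩ := List.append_of_mem hv'
          have h1 := (hp s hs).1
          have h2 := (hq t ht).1
          rw [hab] at h1
          rw [hcd] at h2
          have h3 := (h1.pre (C := {v}) rfl).join (h2.suf (C := {v}) rfl)
          obtain ⟨w, hw, hwS⟩ := hS _ h3
          have ha : ∀ u ∈ a, u ∉ S := by
            intro u hu
            rcases List.eq_nil_or_concat b with rfl | ⟨b', z, rfl⟩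
            · have := (List.append_inj' hab rfl).1
              exact hpS u (this ▸ hu)
            · have hab' : p s ++ [s] = (a ++ v :: b') ++ [z] := by simpa using hab
              have := (List.append_inj' hab' rfl).1
              exact hpS u (by rw [this]; simp [hu])
          have hd : ∀ u ∈ d, u ∉ S := by
            intro u hu
            cases c with
            | nil =>
              have := (List.cons.inj hcd).2
              exact hqS u (this ▸ hu)
            | cons z c =>
              have := (List.cons.inj hcd).2
              exact hqS u (by rw [this]; simp [hu])
          simp at hw
          rcases hw with hw | rfl | hw
          · exact ha w hw hwS
          · exact hvS hwS
          · exact hd w hw hwS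
        have h1 : v = s := by
          simp at hv
          exact hv.resolve_left (fun h => hpS v h hvS)
        have h2 : v = t := by
          simp at hv'
          exact hv'.resolve_right (fun h => hqS v h hvS)
        exact ⟨h1.symm.trans h2, h1 ▸ hvS⟩
      let σ : V → V := fun s => if s ∈ S then s else y
      have hσ : ∀ s ∈ insert x S, σ s ∈ insert y S := by
        intro s _
        by_cases h : s ∈ S <;> simp [σ, h]
      -- Walks through a vertex of `S` are glued there, the remaining two along the edge `xy`.
      let r : V → List V := fun s => if s ∈ S then p s ++ s :: q s else p s ++ s :: y :: q y
      have hr : ∀ s, ∀ v ∈ r s, v ∈ p s ++ [s] ∨ v ∈ σ s :: q (σ s) := by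
        intro s v hv
        by_cases h : s ∈ S <;> simp [r, σ, h] at hv ⊢ <;> tauto
      have hrw : ∀ s ∈ insert x S, IsWalk (fun u v => (u, v) ∈ insert (x, y) D) A B (r s) := by
        intro s hs
        have h1 := (hp s hs).1.mono hsub subset_rfl subset_rfl
        by_cases h : s ∈ S
        · have h2 := (hq s (Finset.mem_insert_of_mem h)).1.mono hsub subset_rfl subset_rfl
          simpa only [r, h, if_true] using h1.join h2
        · have h2 := (hq y (Finset.mem_insert_self _ _)).1.mono hsub subset_rfl subset_rfl
          obtain rfl : s = x := by simpa [h] using hs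
          simpa only [r, h, if_false] using h1.join_edge h2 (Finset.mem_insert_self _ _)
      have hσinj : ∀ s ∈ insert x S, ∀ s' ∈ insert x S, s ≠ s' → σ s ≠ σ s' := by
        intro s hs s' hs' hne
        simp only [σ]
        simp only [Finset.mem_insert] at hs hs'
        split_ifs <;> grind
      have hcross : ∀ s ∈ insert x S, ∀ s' ∈ insert x S, s ≠ s' →
          ∀ v ∈ p s ++ [s], v ∉ σ s' :: q (σ s') := by
        intro s hs s' hs' hne v hv hv'
        obtain ⟨h1, h2⟩ := hmeet s hs _ (hσ s' hs') v hv hv'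
        simp only [σ] at h1
        split_ifs at h1
        · exact hne h1
        · exact hyS (h1 ▸ h2)
      let e := ((insert x S).equivFinOfCardEq hcx).symm
      refine ⟨fun i => r (e i), fun i => hrw _ (e i).2, fun i j hij v hv hv' => ?_⟩
      have hne : (e i : V) ≠ e j := fun h => hij (e.injective (Subtype.ext h))
      rcases hr _ v hv with h | h <;> rcases hr _ v hv' with hj | hj
      · exact hpd _ (e i).2 _ (e j).2 hne v h hj
      · exact hcross _ (e i).2 _ (e j).2 hne v h hj
      · exact hcross _ (e j).2 _ (e i).2 hne.symm v hj h
      · exact hqd _ (hσ _ (e i).2) _ (hσ _ (e j).2) (hσinj _ (e i).2 _ (e j).2 hne) v h hj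

/-! ### Strongly maximal families -/

theorem mem_of_chain_induced {E : V → V → Prop} {U : Set V} :
    ∀ {l : List V} {a : V}, a ∈ U → (a :: l).IsChain (fun u v => E u v ∧ u ∈ U ∧ v ∈ U) →
    ∀ v ∈ a :: l, v ∈ U
  | [], a, ha, _ => by simpa using ha
  | b :: l, a, ha, h => by
    rw [List.isChain_cons_cons] at h
    have := mem_of_chain_induced h.1.2.2 h.2
    intro v hv
    rcases List.mem_cons.1 hv with rfl | hv
    · exact ha
    · exact this v hv

theorem chain_induced {E : V → V → Prop} {U : Set V} :
    ∀ {l : List V}, l.IsChain E → (∀ v ∈ l, v ∈ U) →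
    l.IsChain (fun u v => E u v ∧ u ∈ U ∧ v ∈ U)
  | [], _, _ => by simp
  | [a], _, _ => by simp
  | a :: b :: l, h, hU => by
    rw [List.isChain_cons_cons] at h ⊢
    exact ⟨⟨h.1, hU a (by simp), hU b (by simp)⟩,
      chain_induced h.2 (fun v hv => hU v (List.mem_cons_of_mem _ hv))⟩

theorem finite_meeting {E : V → V → Prop} {F : Set (DiPath V E)} (hdisj : DisjointFamily F)
    (q : DiPath V E) : {p | p ∈ F ∧ ∃ v ∈ p.verts, v ∈ q.verts}.Finite := by
  have h : {p | p ∈ F ∧ ∃ v ∈ p.verts, v ∈ q.verts} ⊆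
      ⋃ v ∈ {v | v ∈ q.verts}, {p | p ∈ F ∧ v ∈ p.verts} := by
    rintro p ⟨hp, v, hv, hvq⟩
    simp only [Set.mem_iUnion]
    exact ⟨v, hvq, hp, hv⟩
  refine Set.Finite.subset (Set.Finite.biUnion (List.finite_toSet _) fun v _ => ?_) h
  refine Set.Subsingleton.finite fun p hp p' hp' => ?_
  by_contra hne
  exact (hdisj hp.1 hp'.1 hne v hp.2) (hp'.right)

/-- For finitely many `A`–`B` paths, one vertex can be chosen on every path so that the vertices
chosen on `F` meet them all. If `F'` is the finite set of paths of `F` that meet the given ones,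
then more than `|F'|` disjoint paths in the finite graph spanned by `F'` and the given paths could
replace `F'` in `F`, against strong maximality; so Menger's theorem yields a separator of at most
`|F'|` vertices, which has exactly one vertex on each path of `F'`. -/
theorem exists_finite_choice {E : V → V → Prop} {A B : Set V}
    {F : Set (DiPath V E)}
    (hF : ∀ p ∈ F, p.IsABPath A B) (hdisj : DisjointFamily F)
    (hmax : ∀ L : Set (DiPath V E), (∀ p ∈ L, p.IsABPath A B) → DisjointFamily L →
      #(↥(L \ F)) ≤ #(↥(F \ L)))
    (Q : Finset (DiPath V E)) (hQ : ∀ q ∈ Q, q.IsABPath A B) :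
    ∃ c : DiPath V E → V, (∀ p, c p ∈ p.verts) ∧ ∀ q ∈ Q, ∃ p ∈ F, c p ∈ q.verts := by
  classical
  have hfin : (⋃ q ∈ Q, {p | p ∈ F ∧ ∃ v ∈ p.verts, v ∈ q.verts}).Finite :=
    Q.finite_toSet.biUnion fun q _ => finite_meeting hdisj q
  obtain ⟨F', hF'⟩ := hfin.exists_finset
  have hF'mem : ∀ p, p ∈ F' ↔ p ∈ F ∧ ∃ q ∈ Q, ∃ v ∈ p.verts, v ∈ q.verts := by
    intro p
    rw [hF']
    simp only [Set.mem_iUnion, Set.mem_ofPred_eq]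
    grind
  let U : Finset V := (F' ∪ Q).biUnion fun p => p.verts.toFinset
  have hU : ∀ v, v ∈ U ↔ ∃ p, (p ∈ F' ∨ p ∈ Q) ∧ v ∈ p.verts := by
    intro v; simp [U]
  -- Paths of `F` outside `F'` avoid `U`.
  have havoid : ∀ p ∈ F, p ∉ F' → ∀ v ∈ p.verts, v ∉ U := by
    intro p hp hpF' v hv hvU
    obtain ⟨p', h | h, hv'⟩ := (hU v).1 hvU
    · exact hdisj hp ((hF'mem p').1 h).1 (fun e => hpF' (e ▸ h)) v hv hv'
    · exact hpF' ((hF'mem p).2 ⟨hp, p', h, v, hv, hv'⟩)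
  let D : Finset (V × V) := (U ×ˢ U).filter fun e => E e.1 e.2
  have hD : (fun u v => (u, v) ∈ D) = fun u v => E u v ∧ u ∈ (U : Set V) ∧ v ∈ (U : Set V) := by
    funext u v
    simp [D]; tauto
  let A' := U.filter (· ∈ A)
  let B' := U.filter (· ∈ B)
  have hwalk : ∀ p : DiPath V E, p.IsABPath A B → (p ∈ F' ∨ p ∈ Q) →
      IsWalk (fun u v => (u, v) ∈ D) A' B' p.verts := by
    intro p hp hpU
    have hpU' : ∀ v ∈ p.verts, v ∈ U := fun v hv => (hU v).2 ⟨p, hpU, hv⟩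
    refine ⟨?_, ⟨_, List.head?_eq_some_head p.ne, ?_⟩, _, List.getLast?_eq_some_getLast p.ne, ?_⟩
    · rw [hD]; exact chain_induced p.chain hpU'
    · simpa [A'] using ⟨hpU' _ (List.head_mem _), hp.1⟩
    · simpa [B'] using ⟨hpU' _ (List.getLast_mem _), hp.2.1⟩
  obtain ⟨S, hS, hcard⟩ : ∃ S : Finset V,
      (∀ l, IsWalk (fun u v => (u, v) ∈ D) A' B' l → ∃ v ∈ l, v ∈ S) ∧ S.card < F'.card + 1 := by
    by_contra hcon
    push Not at hcon
    obtain ⟨P, hP, hPd⟩ := exists_disjoint_walks D A' B' _ hcon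
    have hPU : ∀ i, ∀ v ∈ P i, v ∈ U := by
      intro i
      obtain ⟨h1, ⟨a, h2, h3⟩, -⟩ := hP i
      rw [hD] at h1
      cases hPi : P i with
      | nil => simp
      | cons b l =>
        rw [hPi] at h1 h2
        obtain rfl : b = a := by simpa using h2
        exact mem_of_chain_induced (Finset.mem_filter.1 h3).1 h1
    have hR : ∀ i, ∃ p : DiPath V E, p.IsABPath A B ∧ ∀ v ∈ p.verts, v ∈ P i := fun i =>
      IsWalk.exists_isABPath _ _ rfl ((hP i).mono (fun u v h => (Finset.mem_filter.1 h).2)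
        (fun v h => (Finset.mem_filter.1 h).2) (fun v h => (Finset.mem_filter.1 h).2))
    choose R hRab hRP using hR
    have hRinj : Function.Injective R := by
      intro i j hij
      by_contra hne
      have h := List.head_mem (R i).ne
      exact hPd i j hne _ (hRP i _ h) (hRP j _ (hij ▸ h))
    let L' : Finset (DiPath V E) := Finset.univ.image R
    have hL'U : ∀ r ∈ L', ∀ v ∈ r.verts, v ∈ U := by
      intro r hr v hv
      obtain ⟨i, -, rfl⟩ := Finset.mem_image.1 hr
      exact hPU i v (hRP i v hv)
    have h := hmax ((F \ F') ∪ L') (by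
        rintro p (hp | hp)
        · exact hF p hp.1
        · obtain ⟨i, -, rfl⟩ := Finset.mem_image.1 hp
          exact hRab i) (by
        rintro p (hp | hp) p' (hp' | hp') hne v hv hv'
        · exact hdisj hp.1 hp'.1 hne v hv hv'
        · exact havoid p hp.1 hp.2 v hv (hL'U p' hp' v hv')
        · exact havoid p' hp'.1 hp'.2 v hv' (hL'U p hp v hv)
        · obtain ⟨i, -, rfl⟩ := Finset.mem_image.1 hp
          obtain ⟨j, -, rfl⟩ := Finset.mem_image.1 hp'
          exact hPd i j (fun e => hne (e ▸ rfl)) v (hRP i v hv) (hRP j v hv'))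
    have h1 : ((L' \ F' : Finset _) : Set (DiPath V E)) ⊆ ((F \ F') ∪ L') \ F := by
      intro r hr
      rw [Finset.mem_coe, Finset.mem_sdiff] at hr
      refine ⟨Or.inr hr.1, fun hrF => ?_⟩
      have hm := List.head_mem r.ne
      exact havoid r hrF hr.2 _ hm (hL'U r hr.1 _ hm)
    have h2 : F \ ((F \ F') ∪ L') ⊆ ((F' \ L' : Finset _) : Set (DiPath V E)) := by
      rintro r ⟨hrF, hr⟩
      rw [Finset.mem_coe, Finset.mem_sdiff]
      refine ⟨?_, fun h => hr (Or.inr h)⟩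
      by_contra hrF'
      exact hr (Or.inl ⟨hrF, hrF'⟩)
    have h3 := (Cardinal.mk_le_mk_of_subset h1).trans (h.trans (Cardinal.mk_le_mk_of_subset h2))
    have h4 : ∀ s : Finset (DiPath V E), #(↥(s : Set (DiPath V E))) = s.card := fun s =>
      Cardinal.mk_coe_finset
    rw [h4, h4, Nat.cast_le,
      Finset.card_sdiff_le_card_sdiff_iff, Finset.card_image_of_injective _ hRinj] at h3
    simp at h3
  -- `S` meets each of the `|F'|` disjoint paths of `F'`, hence consists of one vertex on each.
  have hex : ∀ p : F', ∃ v : V, v ∈ p.1.verts ∧ v ∈ S := fun p =>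
    hS _ (hwalk p.1 (hF _ ((hF'mem p.1).1 p.2).1) (Or.inl p.2))
  choose c hcp hcS using hex
  have hcinj : Function.Injective (fun p : F' => (⟨c p, hcS p⟩ : S)) := by
    intro p p' hpp
    have hpp' : c p = c p' := congrArg Subtype.val hpp
    by_contra hne
    exact hdisj ((hF'mem p.1).1 p.2).1 ((hF'mem p'.1).1 p'.2).1 (fun e => hne (Subtype.ext e))
      (c p) (hcp p) (hpp' ▸ hcp p')
  have hle : F'.card ≤ S.card := by
    simpa using Fintype.card_le_of_injective _ hcinj
  have hbij := (Fintype.bijective_iff_injective_and_card _).2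
    ⟨hcinj, by simp only [Fintype.card_coe]; omega⟩
  refine ⟨fun p => if h : p ∈ F' then c ⟨p, h⟩ else p.verts.head p.ne, fun p => ?_, fun q hq => ?_⟩
  · by_cases h : p ∈ F'
    · simpa [h] using hcp ⟨p, h⟩
    · simp [h]
  · obtain ⟨v, hv, hvS⟩ := hS _ (hwalk q (hQ q hq) (Or.inr hq))
    obtain ⟨p, hp⟩ := hbij.2 ⟨v, hvS⟩
    have hp' : c p = v := congrArg Subtype.val hp
    refine ⟨p.1, ((hF'mem p.1).1 p.2).1, ?_⟩
    simpa [hp'] using hv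

end Linkage

/-- If `F` is a strongly maximal family of pairwise vertex-disjoint `A`–`B` paths
(i.e. `|L \ F| ≤ |F \ L|` for every family `L` of pairwise vertex-disjoint
`A`–`B` paths), then there is an `A`–`B` separating set `S` such that every path
of `F` contains precisely one vertex of `S` and every vertex of `S` lies on some
path of `F`. -/
theorem stronglyMaximal_family_gives_separator {V : Type*} (E : V → V → Prop) (A B : Set V)
    (F : Set (DiPath V E))
    (hF : ∀ p ∈ F, p.IsABPath A B) (hdisj : DisjointFamily F)
    (hmax : ∀ L : Set (DiPath V E), (∀ p ∈ L, p.IsABPath A B) → DisjointFamily L →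
      #(↥(L \ F)) ≤ #(↥(F \ L))) :
    ∃ S : Set V, Separates E A B S ∧
      (∀ p ∈ F, ∃! v, v ∈ S ∧ v ∈ p.verts) ∧
      (∀ v ∈ S, ∃ p ∈ F, v ∈ p.verts) := by
  classical
  let _ : TopologicalSpace V := ⊥
  have : DiscreteTopology V := ⟨rfl⟩
  -- The choice functions form a compact set in the product of discrete spaces.
  let K : Set (DiPath V E → V) := Set.univ.pi fun p => {v | v ∈ p.verts}
  have hK : IsCompact K := isCompact_univ_pi fun p => (List.finite_toSet _).isCompact
  let C : {q : DiPath V E // q.IsABPath A B} → Set (DiPath V E → V) := fun q =>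
    ⋃ p ∈ {p | p ∈ F ∧ ∃ v ∈ p.verts, v ∈ q.1.verts}, {c | c p ∈ {v | v ∈ q.1.verts}}
  have hC : ∀ q, IsClosed (C q) := fun q =>
    (finite_meeting hdisj q.1).isClosed_biUnion fun p _ =>
      (isClosed_discrete _).preimage (continuous_apply p)
  obtain ⟨c, hcK, hcC⟩ := hK.inter_iInter_nonempty C hC (by
    intro u
    obtain ⟨c, hc, hcu⟩ := exists_finite_choice hF hdisj hmax (u.image Subtype.val) (by
      intro q hq
      obtain ⟨q, -, rfl⟩ := Finset.mem_image.1 hq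
      exact q.2)
    refine ⟨c, fun p _ => hc p, ?_⟩
    simp only [Set.mem_iInter]
    intro q hq
    obtain ⟨p, hp, hpq⟩ := hcu q.1 (Finset.mem_image_of_mem _ hq)
    exact Set.mem_biUnion (x := p) ⟨hp, c p, hc p, hpq⟩ hpq)
  have hc : ∀ p, c p ∈ p.verts := fun p => hcK p trivial
  refine ⟨c '' F, ?_, ?_, ?_⟩
  · intro q hq
    obtain ⟨p, hp, hpq⟩ := Set.mem_iUnion₂.1 (Set.mem_iInter.1 hcC ⟨q, hq⟩)
    exact ⟨c p, ⟨p, hp.1, rfl⟩, hpq⟩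
  · intro p hp
    refine ⟨c p, ⟨⟨p, hp, rfl⟩, hc p⟩, ?_⟩
    rintro _ ⟨⟨p', hp', rfl⟩, hv⟩
    by_contra hne
    exact hdisj hp' hp (fun e => hne (e ▸ rfl)) _ (hc p') hv
  · rintro _ ⟨p, hp, rfl⟩
    exact ⟨p, hp, hc p⟩
end

section
/- Let H be the hypergraph whose vertex set is a countably infinite set V and whose edges are all nonempty finite subsets of V. Then H has no strongly minimal edge cover; that is, for every set C of nonempty finite subsets of V with ⋃C = V there exists another set D of nonempty finite subsets of V with ⋃D = V such that |C \ D| > |D \ C|. -/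
/-!
Since `V` is infinite and edges are finite, an edge cover `C` has two distinct members `e ≠ f`.
Merging them, i.e. replacing `e` and `f` by the single edge `e ∪ f`, gives an edge cover `D`.
If `e ∪ f` is not in `C`, then `C` loses two edges and gains one. If it is in `C`, then
nothing is gained, while at least one of `e`, `f` differs from `e ∪ f` and is lost.
-/


open Cardinal

/-- An edge cover of the hypergraph whose vertex set is `V` and whose edges are all
nonempty finite subsets of `V`: a set of nonempty finite subsets of `V` whose union is `V`. -/
def IsFinEdgeCover {V : Type*} (C : Set (Set V)) : Prop :=
  (∀ e ∈ C, e.Finite ∧ e.Nonempty) ∧ ⋃₀ C = Set.univ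

lemma IsFinEdgeCover.nontrivial {V : Type*} [Infinite V] {C : Set (Set V)}
    (hC : IsFinEdgeCover C) : C.Nontrivial := by
  by_contra h
  rw [Set.not_nontrivial_iff] at h
  have hfin : (⋃₀ C).Finite := h.finite.sUnion fun e he => (hC.1 e he).1
  rw [hC.2] at hfin
  exact Set.infinite_univ hfin

lemma IsFinEdgeCover.merge {V : Type*} {C : Set (Set V)} (hC : IsFinEdgeCover C)
    {e f : Set V} (he : e ∈ C) (hf : f ∈ C) :
    IsFinEdgeCover (insert (e ∪ f) (C \ {e, f})) := by
  refine ⟨?_, ?_⟩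
  · rintro g (rfl | hg)
    · exact ⟨(hC.1 e he).1.union (hC.1 f hf).1, (hC.1 e he).2.inl⟩
    · exact hC.1 g hg.1
  · refine Set.eq_univ_of_forall fun v => ?_
    obtain ⟨g, hg, hv⟩ : v ∈ ⋃₀ C := hC.2 ▸ Set.mem_univ v
    by_cases hge : g = e
    · exact ⟨e ∪ f, Set.mem_insert _ _, Or.inl (hge ▸ hv)⟩
    by_cases hgf : g = f
    · exact ⟨e ∪ f, Set.mem_insert _ _, Or.inr (hgf ▸ hv)⟩
    exact ⟨g, Or.inr ⟨hg, by simp [hge, hgf]⟩, hv⟩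

/-- The hypergraph on a countably infinite vertex set whose edges are all nonempty
finite subsets has no strongly minimal edge cover: for every edge cover `C` there is
an edge cover `D` with `|C \ D| > |D \ C|`. -/
theorem no_stronglyMinimal_edgeCover {V : Type*} [Countable V] [Infinite V]
    (C : Set (Set V)) (hC : IsFinEdgeCover C) :
    ∃ D : Set (Set V), IsFinEdgeCover D ∧ #(↥(D \ C)) < #(↥(C \ D)) := by
  obtain ⟨e, he, f, hf, hef⟩ := hC.nontrivial
  refine ⟨_, hC.merge he hf, ?_⟩
  by_cases hg : e ∪ f ∈ C
  · have h₁ : insert (e ∪ f) (C \ {e, f}) \ C = ∅ := by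
      rw [Set.sdiff_eq_empty]
      exact Set.insert_subset hg Set.sdiff_subset
    have h₂ : (C \ insert (e ∪ f) (C \ {e, f})).Nonempty := by
      by_cases h : e = e ∪ f
      · exact ⟨f, hf, by simp [← h, hef.symm]⟩
      · exact ⟨e, he, by rintro (h' | h'); exacts [h h', h'.2 (Or.inl rfl)]⟩
    rw [h₁, Cardinal.mk_eq_zero, pos_iff_ne_zero, Cardinal.mk_ne_zero_iff]
    exact h₂.to_subtype
  · have h₁ : insert (e ∪ f) (C \ {e, f}) \ C ⊆ {e ∪ f} := by
      rintro g ⟨rfl | hg', hgC⟩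
      · rfl
      · exact absurd hg'.1 hgC
    have h₂ : (C \ insert (e ∪ f) (C \ {e, f})).Nontrivial := by
      refine ⟨e, ⟨he, ?_⟩, f, ⟨hf, ?_⟩, hef⟩
      · rintro (h | h)
        · exact hg (h ▸ he)
        · simp at h
      · rintro (h | h)
        · exact hg (h ▸ hf)
        · simp at h
    calc #(↥(insert (e ∪ f) (C \ {e, f}) \ C)) ≤ #(↥({e ∪ f} : Set (Set V))) :=
          Cardinal.mk_le_mk_of_subset h₁
      _ = 1 := Cardinal.mk_singleton _
      _ < _ := Cardinal.one_lt_iff_nontrivial.2 h₂.coe_sort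
end

section
/- Let H be the hypergraph on vertex set ℕ whose edges are all finite nonempty sets S of natural numbers satisfying |S| = min S (the cardinality of S equals its least element). Then H has no strongly maximal matching; that is, for every set M of pairwise disjoint edges of H there exists a set L of pairwise disjoint edges of H with |L \ M| > |M \ L|. -/
/-!
It suffices to exchange finitely many edges of `M` for a larger finite number of new edges
(`exists_better_of_exchange`).

If `M` is finite, the interval `[N, 2N)` is an edge disjoint from every edge of `M` as soon as `N`
exceeds all covered vertices, so one edge can be added and none removed.

If `M` is infinite, its edges have distinct least elements, hence arbitrarily large ones
(`exists_card_ge`). Pick `e ∈ M` with at least three elements `x, y, z`, and then `f ∈ M` with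
`|f| = min f > x + y + z`. The set `f` is large enough to contain disjoint sets `A, B, C` of sizes
`x - 1, y - 1, z - 1`, and all of its elements exceed `x, y, z`. So `{x} ∪ A`, `{y} ∪ B`, `{z} ∪ C`
are three disjoint edges inside `e ∪ f`, and they can replace the two edges `e` and `f`.
-/

open Cardinal

/-- An edge of the hypergraph on `ℕ`: a finite nonempty set of natural numbers whose
cardinality equals its least element. -/
def IsMinCardEdge (e : Finset ℕ) : Prop :=
  ∃ h : e.Nonempty, e.card = e.min' h

/-- A matching in this hypergraph: a set of pairwise disjoint edges. -/
def IsMinCardMatching (M : Set (Finset ℕ)) : Prop :=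
  (∀ e ∈ M, IsMinCardEdge e) ∧ M.Pairwise fun e f => Disjoint e f

lemma isMinCardEdge_insert {x : ℕ} {A : Finset ℕ} (hx : 0 < x) (hA : A.card = x - 1)
    (hlt : ∀ a ∈ A, x < a) : IsMinCardEdge (insert x A) := by
  refine ⟨Finset.insert_nonempty x A, ?_⟩
  have hxA : x ∉ A := fun h => lt_irrefl x (hlt x h)
  rw [Finset.card_insert_of_notMem hxA, hA]
  have h : (insert x A).min' (Finset.insert_nonempty x A) = x := by
    apply le_antisymm
    · exact Finset.min'_le _ _ (Finset.mem_insert_self x A)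
    · apply Finset.le_min'
      intro y hy
      rcases Finset.mem_insert.1 hy with rfl | hy
      · exact le_rfl
      · exact (hlt y hy).le
  omega

lemma IsMinCardEdge.card_le {e : Finset ℕ} (he : IsMinCardEdge e) {a : ℕ} (ha : a ∈ e) :
    e.card ≤ a := by
  obtain ⟨h, hc⟩ := he
  exact hc ▸ Finset.min'_le _ _ ha

/-- Replacing a finite part `P` of a matching by a larger finite family `Q` of new edges which is
compatible with the rest of the matching refutes strong maximality. -/
lemma exists_better_of_exchange {M : Set (Finset ℕ)} (hM : IsMinCardMatching M)
    (P Q : Finset (Finset ℕ)) (hQ : IsMinCardMatching (Q : Set (Finset ℕ)))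
    (hdisj : ∀ q ∈ Q, ∀ m ∈ M, m ∉ P → Disjoint q m)
    (hQM : ∀ q ∈ Q, q ∉ M) (hcard : P.card < Q.card) :
    ∃ L : Set (Finset ℕ), IsMinCardMatching L ∧ #(↥(M \ L)) < #(↥(L \ M)) := by
  refine ⟨(M \ P) ∪ Q, ⟨?_, ?_⟩, ?_⟩
  · rintro g (hg | hg)
    · exact hM.1 g hg.1
    · exact hQ.1 g hg
  · rintro g (hg | hg) k (hk | hk) hne
    · exact hM.2 hg.1 hk.1 hne
    · exact (hdisj k hk g hg.1 hg.2).symm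
    · exact hdisj g hg k hk.1 hk.2
    · exact hQ.2 hg hk hne
  · have h1 : M \ ((M \ P) ∪ Q) ⊆ (P : Set (Finset ℕ)) := by
      intro g hg
      by_contra hP
      exact hg.2 (Or.inl ⟨hg.1, hP⟩)
    have h2 : (Q : Set (Finset ℕ)) ⊆ ((M \ P) ∪ Q) \ M := fun q hq => ⟨Or.inr hq, hQM q hq⟩
    calc #(↥(M \ ((M \ P) ∪ Q))) ≤ #(↥(P : Set (Finset ℕ))) := Cardinal.mk_le_mk_of_subset h1
      _ = (P.card : Cardinal) := Cardinal.mk_coe_finset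
      _ < (Q.card : Cardinal) := by exact_mod_cast hcard
      _ = #(↥(Q : Set (Finset ℕ))) := Cardinal.mk_coe_finset.symm
      _ ≤ _ := Cardinal.mk_le_mk_of_subset h2

lemma IsMinCardMatching.eq_of_mem {M : Set (Finset ℕ)} (hM : IsMinCardMatching M)
    {e f : Finset ℕ} (he : e ∈ M) (hf : f ∈ M) {a : ℕ} (hae : a ∈ e) (haf : a ∈ f) : e = f := by
  by_contra hne
  exact Finset.disjoint_left.1 (hM.2 he hf hne) hae haf

/-- The size of an edge is one of its elements, so disjoint edges have distinct sizes, and the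
sizes in an infinite matching are unbounded. -/
lemma exists_card_ge {M : Set (Finset ℕ)} (hM : IsMinCardMatching M) (hinf : M.Infinite) (N : ℕ) :
    ∃ e ∈ M, N ≤ e.card := by
  by_contra! hcon
  refine hinf (Set.Finite.of_injOn (f := Finset.card) (t := Set.Iio N) hcon ?_ (Set.finite_Iio N))
  intro e he f hf hef
  obtain ⟨h, hc⟩ := hM.1 e he
  obtain ⟨h', hc'⟩ := hM.1 f hf
  refine hM.eq_of_mem he hf (a := e.card) ?_ ?_
  · rw [hc]; exact Finset.min'_mem e h
  · rw [show e.card = f.card from hef, hc']; exact Finset.min'_mem f h'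

/-- The hypergraph on `ℕ` whose edges are the finite nonempty sets `S` with
`|S| = min S` has no strongly maximal matching: for every matching `M` there is a
matching `L` with `|L \ M| > |M \ L|`. -/
theorem no_stronglyMaximal_matching (M : Set (Finset ℕ)) (hM : IsMinCardMatching M) :
    ∃ L : Set (Finset ℕ), IsMinCardMatching L ∧ #(↥(M \ L)) < #(↥(L \ M)) := by
  by_cases hfin : M.Finite
  · obtain ⟨N, hN⟩ := (hfin.toFinset.sup id).bddAbove
    have hle : ∀ m ∈ M, ∀ a ∈ m, a ≤ N := fun m hm a ha =>
      hN (Finset.mem_sup.2 ⟨m, hfin.mem_toFinset.2 hm, ha⟩)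
    -- The new edge is the interval `[N + 1, 2N + 1]`, split off at its least element.
    let q : Finset ℕ := insert (N + 1) (Finset.Ioc (N + 1) (2 * N + 1))
    have hq : ∀ a ∈ q, N < a := by
      intro a ha
      simp only [q, Finset.mem_insert, Finset.mem_Ioc] at ha
      omega
    have hqe : IsMinCardEdge q := by
      apply isMinCardEdge_insert (by omega)
      · rw [Nat.card_Ioc]; omega
      · intro a ha
        exact (Finset.mem_Ioc.1 ha).1
    refine exists_better_of_exchange hM ∅ {q} ⟨by simpa using hqe, by simp⟩ ?_ ?_ (by simp)
    · intro g hg m hm _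
      rw [Finset.mem_singleton.1 hg, Finset.disjoint_left]
      intro a ha ham
      exact absurd (hle m hm a ham) (not_le.2 (hq a ha))
    · intro g hg hgM
      rw [Finset.mem_singleton.1 hg] at hgM
      have hmem : N + 1 ∈ q := Finset.mem_insert_self _ _
      have := hle q hgM _ hmem
      omega
  · obtain ⟨e, he, hecard⟩ := exists_card_ge hM hfin 3
    obtain ⟨x, y, z, hx, hy, hz, hxy, hxz, hyz⟩ := Finset.two_lt_card_iff.1 hecard
    obtain ⟨f, hf, hfcard⟩ := exists_card_ge hM hfin (x + y + z + 1)
    have hbig : ∀ a ∈ f, x + y + z < a := fun a ha =>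
      lt_of_lt_of_le hfcard ((hM.1 f hf).card_le ha)
    have hef : ∀ a ∈ e, a ∉ f := by
      intro a ha haf
      have := hbig z (hM.eq_of_mem he hf ha haf ▸ hz)
      omega
    have hx3 := (hM.1 e he).card_le hx
    have hy3 := (hM.1 e he).card_le hy
    have hz3 := (hM.1 e he).card_le hz
    obtain ⟨A, hAf, hA⟩ := Finset.exists_subset_card_eq (s := f) (n := x - 1) (by omega)
    have hcA : (f \ A).card = f.card - A.card := Finset.card_sdiff_of_subset hAf
    obtain ⟨B, hBf, hB⟩ := Finset.exists_subset_card_eq (s := f \ A) (n := y - 1) (by omega)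
    have hcB : ((f \ A) \ B).card = (f \ A).card - B.card := Finset.card_sdiff_of_subset hBf
    obtain ⟨C, hCf, hC⟩ := Finset.exists_subset_card_eq (s := (f \ A) \ B) (n := z - 1) (by omega)
    have hB' : ∀ a ∈ B, a ∈ f ∧ a ∉ A := fun a ha => Finset.mem_sdiff.1 (hBf ha)
    have hC' : ∀ a ∈ C, a ∈ f ∧ a ∉ A ∧ a ∉ B := by
      intro a ha
      have := hCf ha
      simp only [Finset.mem_sdiff] at this
      tauto
    have hxf := hef x hx
    have hyf := hef y hy
    have hzf := hef z hz
    have dAB : Disjoint (insert x A) (insert y B) := by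
      rw [Finset.disjoint_left]; grind
    have dAC : Disjoint (insert x A) (insert z C) := by
      rw [Finset.disjoint_left]; grind
    have dBC : Disjoint (insert y B) (insert z C) := by
      rw [Finset.disjoint_left]; grind
    have nAB : insert x A ≠ insert y B := fun h =>
      Finset.disjoint_left.1 dAB (Finset.mem_insert_self x A) (h ▸ Finset.mem_insert_self x A)
    have nAC : insert x A ≠ insert z C := fun h =>
      Finset.disjoint_left.1 dAC (Finset.mem_insert_self x A) (h ▸ Finset.mem_insert_self x A)
    have nBC : insert y B ≠ insert z C := fun h =>
      Finset.disjoint_left.1 dBC (Finset.mem_insert_self y B) (h ▸ Finset.mem_insert_self y B)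
    have eA : IsMinCardEdge (insert x A) := isMinCardEdge_insert (by omega) hA fun a ha => by
      have := hbig a (hAf ha)
      omega
    have eB : IsMinCardEdge (insert y B) := isMinCardEdge_insert (by omega) hB fun a ha => by
      have := hbig a (hB' a ha).1
      omega
    have eC : IsMinCardEdge (insert z C) := isMinCardEdge_insert (by omega) hC fun a ha => by
      have := hbig a (hC' a ha).1
      omega
    -- A set meeting both `e` and `f` is not an edge of `M`, as it would equal both.
    have hnot : ∀ w ∈ e, ∀ D ⊆ f, 0 < D.card → insert w D ∉ M := by
      intro w hw D hD hpos hmem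
      obtain ⟨d, hd⟩ := Finset.card_pos.1 hpos
      have h1 := hM.eq_of_mem hmem he (Finset.mem_insert_self w D) hw
      exact hef d (h1 ▸ Finset.mem_insert_of_mem hd) (hD hd)
    have hdis : ∀ w ∈ e, ∀ D ⊆ f, ∀ m ∈ M, m ∉ ({e, f} : Finset (Finset ℕ)) →
        Disjoint (insert w D) m := by
      intro w hw D hD m hm hmP
      rw [Finset.mem_insert, Finset.mem_singleton, not_or] at hmP
      rw [Finset.disjoint_left]
      intro a ha ham
      rcases Finset.mem_insert.1 ha with rfl | ha
      · exact hmP.1 (hM.eq_of_mem hm he ham hw)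
      · exact hmP.2 (hM.eq_of_mem hm hf ham (hD ha))
    have hBf' : B ⊆ f := fun a ha => (hB' a ha).1
    have hCf' : C ⊆ f := fun a ha => (hC' a ha).1
    refine exists_better_of_exchange hM {e, f} {insert x A, insert y B, insert z C}
      ⟨?_, ?_⟩ ?_ ?_ ?_
    · intro g hg
      simp only [Finset.coe_insert, Finset.coe_singleton, Set.mem_insert_iff,
        Set.mem_singleton_iff] at hg
      rcases hg with rfl | rfl | rfl <;> assumption
    · intro g hg k hk hne
      simp only [Finset.coe_insert, Finset.coe_singleton, Set.mem_insert_iff,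
        Set.mem_singleton_iff] at hg hk
      rcases hg with rfl | rfl | rfl <;> rcases hk with rfl | rfl | rfl <;>
        first
          | exact absurd rfl hne
          | assumption
          | (apply Disjoint.symm; assumption)
    · intro g hg
      simp only [Finset.mem_insert, Finset.mem_singleton] at hg
      rcases hg with rfl | rfl | rfl
      · exact hdis x hx A hAf
      · exact hdis y hy B hBf'
      · exact hdis z hz C hCf'
    · intro g hg
      simp only [Finset.mem_insert, Finset.mem_singleton] at hg
      rcases hg with rfl | rfl | rfl
      · exact hnot x hx A hAf (by omega)
      · exact hnot y hy B hBf' (by omega)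
      · exact hnot z hz C hCf' (by omega)
    · rw [Finset.card_eq_three.2 ⟨_, _, _, nAB, nAC, nBC, rfl⟩]
      exact lt_of_le_of_lt Finset.card_le_two (by norm_num)
end

section
/- Let P be a finite partially ordered set. Then there exist a chain C in P and a partition D of the elements of P into disjoint antichains such that every antichain in D meets C. -/
/-!
Partition `P` into the level sets of the height function, where the height of `x` is the maximal
length of a strictly increasing series ending at `x`. Height is strictly monotone, so each level
set is an antichain. Let `C` be a longest series ending at an element of maximal height `n`: its
`i`-th element has height exactly `i`, so `C` meets every level `0, …, n`.
-/

/-- Finite case of the fish bone conjecture: in a finite poset there are a chain `C`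
and a partition `D` of the elements into antichains such that every antichain of `D`
meets `C`. -/
theorem fishbone_finite {P : Type*} [PartialOrder P] [Fintype P] :
    ∃ (C : Set P) (D : Set (Set P)),
      IsChain (· ≤ ·) C ∧
      Setoid.IsPartition D ∧
      (∀ T ∈ D, IsAntichain (· ≤ ·) T) ∧
      (∀ T ∈ D, (T ∩ C).Nonempty) := by
  have hfin : ∀ x : P, Order.height x < ⊤ := fun x ↦ by
    refine lt_of_le_of_lt (Order.height_le (n := (Fintype.card P : ℕ∞)) fun p _ ↦ ?_)
      (ENat.natCast_lt_top _)
    have := Fintype.card_le_of_injective p p.strictMono.injective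
    rw [Fintype.card_fin] at this
    exact_mod_cast (Nat.le_succ _).trans this
  have hanti : ∀ T ∈ (Setoid.ker (Order.height (α := P))).classes, IsAntichain (· ≤ ·) T := by
    rintro _ ⟨y, rfl⟩ a ha b hb hne hle
    have hab : Order.height a = Order.height b := Eq.trans ha (Eq.symm hb)
    exact (Order.height_strictMono (lt_of_le_of_ne hle hne) (hfin a)).ne hab
  rcases isEmpty_or_nonempty P with hP | hP
  · exact ⟨∅, _, IsChain.empty, Setoid.isPartition_classes _, hanti,
      fun T ⟨y, _⟩ ↦ isEmptyElim y⟩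
  obtain ⟨x, hx⟩ := Finite.exists_max (Order.height (α := P))
  obtain ⟨n, hn⟩ := ENat.ne_top_iff_exists.mp (hfin x).ne
  obtain ⟨p, hlast, hlen⟩ := Order.exists_series_of_height_eq_coe x hn.symm
  refine ⟨Set.range p, _, p.strictMono.monotone.isChain_range, Setoid.isPartition_classes _,
    hanti, ?_⟩
  rintro _ ⟨y, rfl⟩
  obtain ⟨m, hm⟩ := ENat.ne_top_iff_exists.mp (hfin y).ne
  have hmn : m ≤ n := by
    have := hx y
    rw [← hm, ← hn] at this
    exact_mod_cast this
  have hi := Order.height_eq_index_of_length_eq_height_last (p := p) (by rw [hlast, hlen, hn])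
    ⟨m, by omega⟩
  exact ⟨_, hi.trans hm, Set.mem_range_self _⟩
end

section
/- Let P be a (possibly infinite) partially ordered set of width at most 2, i.e., every antichain in P has at most 2 elements. Then there exist a chain C in P and a partition D of the elements of P into disjoint antichains such that every antichain in D meets C. -/
/-!
Width at most two means that no three elements are pairwise incomparable. By Dilworth's theorem for
width two (Galvin's induction for finite sets, then Rado selection) the poset is a union of two
chains `A` and `B`. Let `r a b` say that `a ∈ A` and `b ∈ B` are incomparable. The theorem becomes
an instance of infinite König duality for the bipartite graph `r`: there is `X ⊆ A` such that the
neighbourhood `N(X)` is matched into `X` and `A \ X` is matched into `B \ N(X)`. Then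
`C = X ∪ (B \ N(X))` is a chain, and each antichain of `D` consists of one element of `C` and the
at most one element matched to it.

The duality uses the structure of `r`: it satisfies the exchange property `Crossing`, and each
`N(a)` is convex in `B` (`ConvexNbrs`). Both properties are invariant under reversing both orders.
Call `X` a wave if `N(X)` can be matched into `X`. The union of all waves is a wave, and deleting it
together with its neighbourhood leaves a graph without nonempty waves (`Unhindered`). What remains
is to match all of `A` into `B` in an unhindered graph (`Unhindered.exists_matching`). Write `deg a`
for the cardinality of `N(a)`.

* The basic estimate (`Unhindered.mk_lt`): for every infinite cardinal `c` and every `b₀`, fewer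
  than `c` of the neighbours of `b₀` have degree less than `c`; otherwise a wave could be built by
  the greedy lemma `exists_injective_of_card_lt`.
* Vertices of finite degree satisfy Hall's condition and are matched by some `f`. If `deg a` is
  infinite, then `f` leaves `deg a` many elements of `N(a)` unused (`mk_free_nbrs`), because a
  matching with a defect smaller than an infinite set of vertices would again produce a wave
  (`Unhindered.false_of_defect`).
* For infinite degrees, take a maximal `S ⊆ B` such that every `N(a)` contains at most one element
  of `S`. It cuts `B` into pieces, and each `N(a)` meets at most two of them, so each `a` has a piece
  in which it has `deg a` many unused neighbours. Among the vertices assigned to one piece, fewer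
  than `c` have degree less than `c` (`mk_lt_of_cut`): these vertices are either adjacent to one of
  the two elements of `S` bounding the piece, or their neighbourhoods near such an element are
  nested. Hence the greedy lemma matches the vertices of each piece inside that piece.
-/

open Cardinal

universe u

namespace Fishbone

/-! ### Cardinal arithmetic and a greedy choice lemma -/

section Small

lemma mk_lt_of_subset_union {α : Type u} {s t w : Set α} {c : Cardinal.{u}} (hc : ℵ₀ ≤ c)
    (h : s ⊆ t ∪ w) (ht : #t < c) (hw : #w < c) : #s < c :=
  ((mk_le_mk_of_subset h).trans (mk_union_le t w)).trans_lt (add_lt_of_lt hc ht hw)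

lemma mk_biUnion_le_of_le {α β : Type u} {s : Set α} {t : α → Set β} {c : Cardinal.{u}}
    (hc : ℵ₀ ≤ c) (hs : #s ≤ c) (ht : ∀ a ∈ s, #(t a) ≤ c) : #(⋃ a ∈ s, t a : Set β) ≤ c := by
  refine (mk_biUnion_le t s).trans ?_
  refine (mul_le_mul' hs (ciSup_le' (fun x : s => ht x.1 x.2))).trans ?_
  exact (mul_eq_self hc).le

/-- A greedy choice of distinct representatives for infinite sets: it suffices that for every
infinite `c`, fewer than `c` of the sets have cardinality less than `c`. The index set is
well-ordered by the cardinality of `S i` first, so that each `i` has fewer than `#(S i)`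
predecessors. -/
theorem exists_injective_of_card_lt {ι β : Type u} (S : ι → Set β) (hinf : ∀ i, ℵ₀ ≤ #(S i))
    (h : ∀ c : Cardinal.{u}, ℵ₀ ≤ c → #{i | #(S i) < c} < c) :
    ∃ f : ι → β, Function.Injective f ∧ ∀ i, f i ∈ S i := by
  classical
  have key : ∀ c : Cardinal.{u}, ∃ e : {i // #(S i) = c} → Ordinal.{u},
      Function.Injective e ∧ ∀ i, e i < c.ord := by
    intro c
    obtain ⟨r, hr, hor⟩ := Cardinal.exists_ord_eq {i // #(S i) = c}
    refine ⟨Ordinal.typein r, Ordinal.typein_injective r, fun i => ?_⟩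
    refine (Ordinal.typein_lt_type r i).trans_le ?_
    rw [← hor, Cardinal.ord_le_ord, ← Order.lt_succ_iff]
    have hc : ℵ₀ ≤ c := i.2 ▸ hinf i.1
    refine lt_of_le_of_lt ?_ (h (Order.succ c) (hc.trans (Order.le_succ c)))
    exact mk_le_mk_of_subset (s := {i | #(S i) = c}) fun j hj => by
      simp only [Set.mem_ofPred_eq] at hj ⊢
      rw [hj]; exact Order.lt_succ c
  choose e he_inj he_lt using key
  have he_eq : ∀ j c (hj : #(S j) = c), e c ⟨j, hj⟩ = e _ ⟨j, rfl⟩ := by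
    intro j c hj; subst hj; rfl
  let rk : ι → Cardinal.{u} ×ₗ Ordinal.{u} := fun i => toLex (#(S i), e _ ⟨i, rfl⟩)
  have rk_inj : Function.Injective rk := by
    intro i j hij
    have h1 : #(S i) = #(S j) := congrArg (fun p => (ofLex p).1) hij
    have h2 : e _ ⟨i, rfl⟩ = e _ ⟨j, rfl⟩ := congrArg (fun p => (ofLex p).2) hij
    have : ∀ c (hi : #(S i) = c) (hj : #(S j) = c), e c ⟨i, hi⟩ = e c ⟨j, hj⟩ → i = j :=
      fun c hi hj H => congrArg Subtype.val (he_inj c H)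
    refine this (#(S j)) h1 rfl ?_
    rw [← h2]
    exact he_eq i _ h1
  have hpred : ∀ i, #{j | rk j < rk i} < #(S i) := by
    intro i
    refine mk_lt_of_subset_union (hinf i)
      (t := {j | #(S j) < #(S i)}) (w := {j | ∃ hj : #(S j) = #(S i), e _ ⟨j, hj⟩ < e _ ⟨i, rfl⟩})
      ?_ (h _ (hinf i)) ?_
    · intro j hj
      rcases (Prod.Lex.lt_iff).1 hj with h1 | ⟨h1, h2⟩
      · exact Or.inl h1
      · have h1' : #(S j) = #(S i) := h1
        have h2' : e _ ⟨j, rfl⟩ < e _ ⟨i, rfl⟩ := h2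
        exact Or.inr ⟨h1', (he_eq j _ h1').trans_lt h2'⟩
    · have h1 : (e _ ⟨i, rfl⟩).card < #(S i) := Cardinal.lt_ord.1 (he_lt _ ⟨i, rfl⟩)
      have h2 := Cardinal.mk_Iio_ordinal (e _ ⟨i, rfl⟩)
      rw [← Cardinal.lift_lt.{u, u+1}]
      refine lt_of_le_of_lt ?_ (h2.le.trans_lt (Cardinal.lift_lt.2 h1))
      rw [← Cardinal.lift_id'.{u, u+1} #(Set.Iio _)]
      refine Cardinal.mk_le_of_injective (α := ULift _) (β := ULift _)
        (f := fun j => ⟨⟨e _ ⟨j.down.1, j.down.2.1⟩, j.down.2.2⟩⟩) ?_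
      rintro ⟨j, hj⟩ ⟨k, hk⟩ hjk
      have := he_inj _ (congrArg (fun x => (ULift.down x).1) hjk)
      simp only [Subtype.mk.injEq] at this
      subst this; rfl
  have hwf : WellFounded fun i j => rk i < rk j := InvImage.wf rk wellFounded_lt
  have hne : ∀ i (g : ∀ j, rk j < rk i → β), ∃ b ∈ S i, ∀ j hj, g j hj ≠ b := by
    intro i g
    by_contra! hcon
    have : S i ⊆ Set.range (fun j : {j | rk j < rk i} => g j.1 j.2) := by
      intro b hb
      obtain ⟨j, hj, hjb⟩ := hcon b hb
      exact ⟨⟨j, hj⟩, hjb⟩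
    exact absurd ((mk_le_mk_of_subset this).trans mk_range_le) (not_le.2 (hpred i))
  choose pick hpick hpick' using hne
  let f : ι → β := hwf.fix pick
  have hf : ∀ i, f i = pick i (fun j _ => f j) := fun i => hwf.fix_eq pick i
  refine ⟨f, ?_, fun i => by rw [hf]; exact hpick _ _⟩
  have hlt : ∀ i j, rk j < rk i → f j ≠ f i := by
    intro i j hij
    rw [hf i]
    exact hpick' i (fun j _ => f j) j hij
  intro i j hij
  rcases lt_trichotomy (rk i) (rk j) with h1 | h1 | h1
  · exact absurd hij (hlt _ _ h1)
  · exact rk_inj h1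
  · exact absurd hij.symm (hlt _ _ h1)

end Small

/-! ### Waves and the number of neighbours of small degree -/

section Waves

variable {A B : Type u}

/-- The neighbourhood `N(X)` of a set `X ⊆ A` in the bipartite graph `r`. -/
def nbrs (r : A → B → Prop) (X : Set A) : Set B := {b | ∃ a ∈ X, r a b}

/-- `X` is a wave if its neighbourhood can be matched into `X`. Only the values of `h` on
`nbrs r X` matter. -/
def IsWave (r : A → B → Prop) (X : Set A) : Prop :=
  ∃ h : B → A, Set.InjOn h (nbrs r X) ∧ ∀ b ∈ nbrs r X, h b ∈ X ∧ r (h b) b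

/-- The bipartite graph `r` has no nonempty wave. -/
def Unhindered (r : A → B → Prop) : Prop := ∀ X : Set A, IsWave r X → X = ∅

/-- Crossing edges `a b'` and `a' b` can be uncrossed: `a b` and `a' b'` are edges too. This holds
for the incomparability relation between two chains of a poset. -/
def Crossing [LT A] [LT B] (r : A → B → Prop) : Prop :=
  ∀ ⦃a a' : A⦄ ⦃b b' : B⦄, a < a' → b < b' → r a b' → r a' b → r a b ∧ r a' b'

lemma Crossing.dual [LT A] [LT B] {r : A → B → Prop} (h : Crossing r) :
    Crossing (A := Aᵒᵈ) (B := Bᵒᵈ) r :=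
  fun _ _ _ _ ha hb h1 h2 => (h ha hb h2 h1).symm

/-- Every vertex of `A` has a neighbourhood that is convex in `B`. -/
def ConvexNbrs [LT B] (r : A → B → Prop) : Prop :=
  ∀ ⦃a : A⦄ ⦃b b' b'' : B⦄, b < b' → b' < b'' → r a b → r a b'' → r a b'

lemma ConvexNbrs.dual [LT B] {r : A → B → Prop} (h : ConvexNbrs r) :
    ConvexNbrs (A := Aᵒᵈ) (B := Bᵒᵈ) r :=
  fun _ _ _ _ h1 h2 h3 h4 => h h2 h1 h4 h3

lemma mk_nbrs_le {r : A → B → Prop} {X : Set A} {c : Cardinal.{u}} (hc : ℵ₀ ≤ c)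
    (hX : #X ≤ c) (h : ∀ a ∈ X, #{b | r a b} ≤ c) : #(nbrs r X) ≤ c := by
  refine (mk_le_mk_of_subset ?_).trans (mk_biUnion_le_of_le hc hX h)
  rintro b ⟨a, ha, hab⟩
  exact Set.mem_biUnion ha hab

/-- A set `X` is a wave if each of its neighbours has infinitely many neighbours in `X`, and few
neighbours have few neighbours in `X`. -/
lemma isWave_of_infinite {r : A → B → Prop} {X : Set A} (hX : X.Nonempty)
    (h : ∀ b ∈ nbrs r X, ℵ₀ ≤ #{a | a ∈ X ∧ r a b})
    (h' : ∀ c : Cardinal.{u}, ℵ₀ ≤ c → #{b | b ∈ nbrs r X ∧ #{a | a ∈ X ∧ r a b} < c} < c) :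
    IsWave r X := by
  classical
  obtain ⟨f, hf, hfS⟩ := exists_injective_of_card_lt
    (fun b : nbrs r X => {a | a ∈ X ∧ r a b}) (fun b => h b.1 b.2) (by
      intro c hc
      refine lt_of_le_of_lt ?_ (h' c hc)
      refine Cardinal.mk_le_of_injective (f := fun b => ⟨b.1.1, b.1.2, b.2⟩) ?_
      rintro ⟨⟨b, _⟩, _⟩ ⟨⟨b', _⟩, _⟩ hbb
      simpa using hbb)
  refine ⟨fun b => if hb : b ∈ nbrs r X then f ⟨b, hb⟩ else hX.some, ?_, ?_⟩
  · intro b hb b' hb' hbb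
    simp only [hb, hb', dite_true] at hbb
    exact congrArg Subtype.val (hf hbb)
  · intro b hb
    simp only [hb, dite_true]
    exact hfS ⟨b, hb⟩

variable [LinearOrder A] [LinearOrder B]

/-- Suppose all elements of `X` are adjacent to `b₀` and have degree less than `c`. After the
removal of fewer than `c` elements of `X`, and robustly under further small removals, fewer than `c`
neighbours above `b₀` have fewer than `c` neighbours in the rest. By `Crossing`, a neighbour
`b > b₀` of `a ∈ X` is adjacent to every element of `X` above `a`. So either every such `b` has many
neighbours, or a small final segment of `X`, from some `a₁` on, can be removed, and what is left has
all its neighbours above `b₀` in `N(a₁)`. -/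
lemma exists_trim {r : A → B → Prop} (hM : Crossing r) {c : Cardinal.{u}} (hc : ℵ₀ ≤ c)
    {b₀ : B} {X : Set A} (hX : ∀ a ∈ X, r a b₀ ∧ #{b | r a b} < c) :
    ∃ T : Set A, #T < c ∧ ∀ X₁ ⊆ X \ T, #(X \ X₁ : Set A) < c →
      #{b | b ∈ nbrs r X₁ ∧ b₀ < b ∧ #{a | a ∈ X₁ ∧ r a b} < c} < c := by
  by_cases h : ∃ a₁ ∈ X, #{a | a ∈ X ∧ a₁ ≤ a} < c
  · obtain ⟨a₁, ha₁, h⟩ := h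
    refine ⟨_, h, fun X₁ hX₁ _ => ?_⟩
    refine lt_of_le_of_lt (mk_le_mk_of_subset ?_) (hX a₁ ha₁).2
    rintro b ⟨⟨a, ha, hab⟩, hb, -⟩
    have ha' := hX₁ ha
    have hlt : a < a₁ := by
      by_contra hcon
      exact ha'.2 ⟨ha'.1, not_lt.1 hcon⟩
    exact (hM hlt hb hab (hX a₁ ha₁).1).2
  · push Not at h
    refine ⟨∅, by simpa using aleph0_pos.trans_le hc, fun X₁ hX₁ hsmall => ?_⟩
    have : {b | b ∈ nbrs r X₁ ∧ b₀ < b ∧ #{a | a ∈ X₁ ∧ r a b} < c} = ∅ := by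
      refine Set.eq_empty_of_forall_notMem ?_
      rintro b ⟨⟨a, ha, hab⟩, hb, hlt⟩
      refine absurd (h a (hX₁ ha).1) (not_le.2 ?_)
      refine mk_lt_of_subset_union hc (t := {a | a ∈ X₁ ∧ r a b}) (w := X \ X₁) ?_ hlt hsmall
      rintro a' ⟨ha', hle⟩
      by_cases h1 : a' ∈ X₁
      · refine Or.inl ⟨h1, ?_⟩
        rcases hle.lt_or_eq with h2 | rfl
        · exact (hM h2 hb hab (hX a' ha').1).2
        · exact hab
      · exact Or.inr ⟨ha', h1⟩
    rw [this]
    simpa using aleph0_pos.trans_le hc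

/-- In an unhindered graph, fewer than `c` neighbours of a vertex `b₀` have degree less than `c`,
for every infinite cardinal `c`. -/
theorem Unhindered.mk_lt {r : A → B → Prop} (hU : Unhindered r) (hM : Crossing r)
    {c : Cardinal.{u}} (hc : ℵ₀ ≤ c) (b₀ : B) : #{a | r a b₀ ∧ #{b | r a b} < c} < c := by
  by_contra hcon
  rw [not_lt, le_mk_iff_exists_subset] at hcon
  obtain ⟨X, hX, hXc⟩ := hcon
  obtain ⟨T, hT, hTX⟩ := exists_trim hM hc hX
  obtain ⟨T', hT', hTX'⟩ := exists_trim (A := Aᵒᵈ) (B := Bᵒᵈ) hM.dual hc hX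
  set X₁ : Set A := X \ (T ∪ T') with hX₁
  have hXX₁ : #(X \ X₁ : Set A) < c := by
    refine mk_lt_of_subset_union hc (t := T) (w := T') ?_ hT hT'
    rintro a ⟨ha, ha'⟩
    by_contra h
    exact ha' ⟨ha, h⟩
  have h1 := hTX X₁ (fun a ha => ⟨ha.1, fun h => ha.2 (Or.inl h)⟩) hXX₁
  have h2 := hTX' X₁ (fun a ha => ⟨ha.1, fun h => ha.2 (Or.inr h)⟩) hXX₁
  -- `Q` collects the neighbours of `X₁` whose degree into `X₁` is too small for the greedy lemma
  set Q : Set B := {b | b ∈ nbrs r X₁ ∧ #{a | a ∈ X₁ ∧ r a b} < c} with hQ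
  have hQc : #Q < c := by
    refine mk_lt_of_subset_union hc (t := {b₀}) ?_ (by simpa using one_lt_aleph0.trans_le hc)
      (mk_lt_of_subset_union hc subset_rfl h1 h2)
    rintro b ⟨hb, hb'⟩
    rcases lt_trichotomy b₀ b with h | h | h
    · exact Or.inr (Or.inl ⟨hb, h, hb'⟩)
    · exact Or.inl h.symm
    · exact Or.inr (Or.inr ⟨hb, h, hb'⟩)
  -- Regularity of `k` bounds the union of fewer than `k` sets of size less than `k`. Deleting this
  -- union `Z` from `X₁` leaves only neighbours of degree at least `k`.
  obtain ⟨k, hk, hQk, hkc⟩ : ∃ k : Cardinal.{u}, k.IsRegular ∧ #Q < k ∧ k ≤ c := by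
    by_cases hfin : #Q < ℵ₀
    · exact ⟨ℵ₀, isRegular_aleph0, hfin, hc⟩
    · exact ⟨_, isRegular_succ (not_lt.1 hfin), Order.lt_succ _, Order.succ_le_of_lt hQc⟩
  set Z : Set A := ⋃ b ∈ {b | b ∈ nbrs r X₁ ∧ #{a | a ∈ X₁ ∧ r a b} < k}, {a | a ∈ X₁ ∧ r a b}
    with hZ
  have hZk : #Z < k := by
    refine (card_biUnion_lt_iff_forall_of_isRegular hk ?_).2 fun b hb => hb.2
    exact (mk_le_mk_of_subset (t := Q) fun b hb => ⟨hb.1, hb.2.trans_le hkc⟩).trans_lt hQk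
  have hX'c : #(X \ (X₁ \ Z) : Set A) < c := by
    refine mk_lt_of_subset_union hc (t := X \ X₁) (w := Z) ?_ hXX₁ (hZk.trans_le hkc)
    rintro a ⟨ha, ha'⟩
    by_contra h
    rw [Set.mem_union, not_or] at h
    exact ha' ⟨by_contra fun h' => h.1 ⟨ha, h'⟩, h.2⟩
  have hne : (X₁ \ Z).Nonempty := by
    by_contra hem
    rw [Set.not_nonempty_iff_eq_empty] at hem
    rw [hem, Set.sdiff_empty, hXc] at hX'c
    exact lt_irrefl _ hX'c
  -- large degrees in `X₁` stay large in `X₁ \ Z`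
  have hlarge : ∀ (m : Cardinal.{u}) (b : B), k ≤ m → m ≤ #{a | a ∈ X₁ ∧ r a b} →
      m ≤ #{a | a ∈ X₁ \ Z ∧ r a b} := by
    intro m b hm hmb
    by_contra hlt
    refine absurd hmb (not_le.2 ?_)
    refine mk_lt_of_subset_union (hk.aleph0_le.trans hm) ?_ (not_le.1 hlt) (hZk.trans_le hm)
    rintro a ⟨ha, hab⟩
    by_cases haZ : a ∈ Z
    · exact Or.inr haZ
    · exact Or.inl ⟨⟨ha, haZ⟩, hab⟩
  have hnb : ∀ b ∈ nbrs r (X₁ \ Z), b ∈ nbrs r X₁ ∧ k ≤ #{a | a ∈ X₁ \ Z ∧ r a b} := by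
    rintro b ⟨a, ha, hab⟩
    refine ⟨⟨a, ha.1, hab⟩, hlarge k b le_rfl (not_lt.1 fun hlt => ha.2 ?_)⟩
    exact Set.mem_biUnion (show b ∈ {b | b ∈ nbrs r X₁ ∧ #{a | a ∈ X₁ ∧ r a b} < k} from
      ⟨⟨a, ha.1, hab⟩, hlt⟩) ⟨ha.1, hab⟩
  refine hne.ne_empty (hU _ (isWave_of_infinite hne (fun b hb => hk.aleph0_le.trans (hnb b hb).2) ?_))
  intro m hm
  rcases le_or_gt m k with hmk | hmk
  · have : {b | b ∈ nbrs r (X₁ \ Z) ∧ #{a | a ∈ X₁ \ Z ∧ r a b} < m} = ∅ := by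
      refine Set.eq_empty_of_forall_notMem ?_
      rintro b ⟨hb, hb'⟩
      exact absurd (hb'.trans_le hmk) (not_lt.2 (hnb b hb).2)
    rw [this]
    simpa using aleph0_pos.trans_le hm
  rcases le_or_gt m c with hmc | hmc
  · refine lt_of_le_of_lt (mk_le_mk_of_subset ?_) (hQk.trans hmk)
    rintro b ⟨hb, hb'⟩
    refine ⟨(hnb b hb).1, not_le.1 fun hcb => ?_⟩
    exact absurd (hlarge c b hkc hcb) (not_le.2 (hb'.trans_le hmc))
  · refine lt_of_le_of_lt ?_ hmc
    refine (mk_le_mk_of_subset fun b hb => ?_).trans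
      (mk_nbrs_le (r := r) (X := X) hc hXc.le fun a ha => (hX ha).2.le)
    obtain ⟨a, ha, hab⟩ := (hnb b hb.1).1
    exact ⟨a, ha.1, hab⟩

end Waves

/-! ### Vertices with finitely many neighbours -/

section FiniteDegree

/-- Hall's marriage theorem for families of finite sets indexed by a set `Y`, in the form of an
alternative. -/
lemma hall_alternative {ι α : Type u} [Nonempty α] (Y : Set ι) (t : ι → Set α)
    (hfin : ∀ b ∈ Y, (t b).Finite) :
    (∃ h : ι → α, Set.InjOn h Y ∧ ∀ b ∈ Y, h b ∈ t b) ∨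
      ∃ S : Finset ι, (S : Set ι) ⊆ Y ∧ (⋃ b ∈ S, t b).ncard < S.card := by
  classical
  by_cases hall : ∀ S : Finset Y,
      S.card ≤ (S.biUnion fun b => (hfin b.1 b.2).toFinset).card
  · left
    obtain ⟨f, hf, hft⟩ := (Finset.all_card_le_biUnion_card_iff_exists_injective
      (fun b : Y => (hfin b.1 b.2).toFinset)).1 hall
    refine ⟨fun b => if hb : b ∈ Y then f ⟨b, hb⟩ else Classical.arbitrary α, ?_, ?_⟩
    · intro b hb b' hb' hbb
      simp only [hb, hb', dite_true] at hbb
      exact congrArg Subtype.val (hf hbb)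
    · intro b hb
      simp only [hb, dite_true]
      simpa using hft ⟨b, hb⟩
  · right
    push Not at hall
    obtain ⟨S, hS⟩ := hall
    refine ⟨S.map (Function.Embedding.subtype _), ?_, ?_⟩
    · intro b hb
      simp only [Finset.coe_map, Set.mem_image] at hb
      obtain ⟨b, _, rfl⟩ := hb
      exact b.2
    · rw [Finset.card_map]
      refine lt_of_le_of_lt (le_of_eq ?_) hS
      rw [← Set.ncard_coe_finset]
      congr 1
      ext a
      simp

variable {A B : Type u} {r : A → B → Prop}

lemma nonempty_right (hU : Unhindered r) [Nonempty A] : Nonempty B := by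
  by_contra hB
  rw [not_nonempty_iff] at hB
  obtain ⟨a⟩ := ‹Nonempty A›
  exact Set.singleton_ne_empty a (hU {a} ⟨fun b => hB.elim b, fun b => hB.elim b, fun b => hB.elim b⟩)

/-- The strict Hall condition for finite sets: a minimal finite violator `X` would satisfy Hall's
condition from the side of `nbrs r X`, hence be a wave. -/
lemma Unhindered.lt_ncard_nbrs (hU : Unhindered r) (n : ℕ) : ∀ X : Finset A, X.card = n →
    X.Nonempty → (nbrs r X).Finite → n < (nbrs r X).ncard := by
  classical
  induction n using Nat.strong_induction_on with
  | _ n ih =>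
  intro X hXn hX hfin
  by_contra! hle
  have : Nonempty A := ⟨hX.choose⟩
  rcases hall_alternative (nbrs r X) (fun b => {a | a ∈ X ∧ r a b})
    (fun b _ => X.finite_toSet.subset fun a ha => ha.1) with ⟨h, hinj, hh⟩ | ⟨S, hSX, hS⟩
  · have := hU X ⟨h, hinj, hh⟩
    exact hX.ne_empty (by simpa using this)
  · set T : Finset A := X.filter fun a => ∃ b ∈ S, r a b with hT
    have hTS : (⋃ b ∈ S, {a | a ∈ X ∧ r a b}) = (T : Set A) := by
      ext a; simp [hT]
    rw [hTS, Set.ncard_coe_finset] at hS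
    have hSN : S.card ≤ (nbrs r X).ncard := by
      rw [← Set.ncard_coe_finset S]
      exact Set.ncard_le_ncard hSX hfin
    have hTX : T ⊆ X := Finset.filter_subset _ _
    have hTcard := Finset.card_sdiff_add_card_eq_card hTX
    have hTpos : 0 < T.card := by
      have hSpos : 0 < S.card := by omega
      obtain ⟨b, hb⟩ := Finset.card_pos.1 hSpos
      obtain ⟨a, ha, hab⟩ := hSX hb
      exact Finset.card_pos.2 ⟨a, Finset.mem_filter.2 ⟨ha, b, hb, hab⟩⟩
    have hsub : nbrs r (X \ T : Finset A) ⊆ nbrs r X \ S := by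
      rintro b ⟨a, ha, hab⟩
      have ha' := Finset.mem_sdiff.1 (Finset.mem_coe.1 ha)
      exact ⟨⟨a, ha'.1, hab⟩, fun hb => ha'.2 (Finset.mem_filter.2 ⟨ha'.1, b, hb, hab⟩)⟩
    have hcard : (nbrs r (X \ T : Finset A)).ncard ≤ (nbrs r X).ncard - S.card := by
      refine (Set.ncard_le_ncard hsub (hfin.sdiff)).trans ?_
      rw [Set.ncard_sdiff hSX (S.finite_toSet), Set.ncard_coe_finset]
    have := ih (X \ T).card (by omega) (X \ T) rfl (Finset.card_pos.1 (by omega))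
      (hfin.subset (hsub.trans Set.sdiff_subset))
    omega

lemma Unhindered.exists_matching_finite (hU : Unhindered r) [Nonempty B] :
    ∃ f : A → B, Set.InjOn f {a | #{b | r a b} < ℵ₀} ∧
      ∀ a, #{b | r a b} < ℵ₀ → r a (f a) := by
  classical
  rcases hall_alternative {a | #{b | r a b} < ℵ₀} (fun a => {b | r a b})
    (fun a ha => lt_aleph0_iff_set_finite.1 ha) with ⟨h, hinj, hh⟩ | ⟨S, hSX, hS⟩
  · exact ⟨h, hinj, hh⟩
  · exfalso
    have heq : (⋃ a ∈ S, {b | r a b}) = nbrs r S := by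
      ext b; simp [nbrs]
    rw [heq] at hS
    have hfin : (nbrs r S).Finite := by
      rw [← heq]
      exact S.finite_toSet.biUnion fun a ha => lt_aleph0_iff_set_finite.1 (hSX ha)
    have := hU.lt_ncard_nbrs S.card S rfl (Finset.card_pos.1 (by omega)) hfin
    omega

/-- In an unhindered graph, no infinite set `X` in which all `b` have finite degree has a
neighbourhood that is matched into `X` up to finitely many elements. If `w` is one of the unmatched
elements, then either the matching can be changed to cover `w` as well, or Hall's condition fails for
some finite `S`, and removing the neighbours of `S` from `X` gets rid of `w`. -/
lemma Unhindered.false_of_finite_defect (hU : Unhindered r) (n : ℕ) :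
    ∀ (W : Finset B) (X : Set A) (h : B → A), W.card = n → X.Infinite →
      (∀ b, {a | a ∈ X ∧ r a b}.Finite) → Set.InjOn h (nbrs r X \ W) →
      (∀ b ∈ nbrs r X \ W, h b ∈ X ∧ r (h b) b) → False := by
  classical
  induction n with
  | zero =>
    intro W X h hW hX _ hinj hh
    rw [Finset.card_eq_zero] at hW
    subst hW
    simp only [Finset.coe_empty, Set.sdiff_empty] at hinj hh
    exact hX.nonempty.ne_empty (hU X ⟨h, hinj, hh⟩)
  | succ n ih =>
    intro W X h hW hX hlf hinj hh
    obtain ⟨w, W', hw, rfl, hW'⟩ := Finset.card_eq_succ.1 hW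
    have : Nonempty A := ⟨hX.nonempty.some⟩
    rcases hall_alternative (nbrs r X \ W') (fun b => {a | a ∈ X ∧ r a b})
      (fun b _ => hlf b) with ⟨h', hinj', hh'⟩ | ⟨S, hSX, hS⟩
    · exact ih W' X h' hW' hX hlf hinj' hh'
    · set T : Set A := ⋃ b ∈ S, {a | a ∈ X ∧ r a b} with hT
      have hTfin : T.Finite := S.finite_toSet.biUnion fun b _ => hlf b
      have hmem : ∀ b ∈ S, b ≠ w → b ∈ nbrs r X \ (insert w W' : Finset B) := by
        intro b hb hbw
        refine ⟨(hSX hb).1, ?_⟩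
        simp only [Finset.coe_insert, Set.mem_insert_iff, not_or]
        exact ⟨hbw, (hSX hb).2⟩
      have himg : h '' (S.erase w : Finset B) ⊆ T := by
        rintro _ ⟨b, hb, rfl⟩
        have hb' := Finset.mem_erase.1 (Finset.mem_coe.1 hb)
        exact Set.mem_biUnion hb'.2 (hh b (hmem b hb'.2 hb'.1))
      have hinjS : Set.InjOn h (S.erase w : Finset B) := by
        refine hinj.mono fun b hb => ?_
        have hb' := Finset.mem_erase.1 (Finset.mem_coe.1 hb)
        exact hmem b hb'.2 hb'.1
      have hcard := Set.ncard_le_ncard himg hTfin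
      rw [hinjS.ncard_image, Set.ncard_coe_finset] at hcard
      have hwS : w ∈ S := by
        by_contra hwS
        rw [Finset.erase_eq_of_notMem hwS] at hcard
        omega
      have hTeq : h '' (S.erase w : Finset B) = T := by
        refine Set.eq_of_subset_of_ncard_le himg ?_ hTfin
        rw [hinjS.ncard_image, Set.ncard_coe_finset, Finset.card_erase_of_mem hwS]
        omega
      have hnS : ∀ b ∈ nbrs r (X \ T), b ∉ S := by
        rintro b ⟨a, ha, hab⟩ hb
        exact ha.2 (Set.mem_biUnion hb ⟨ha.1, hab⟩)
      have hsub : nbrs r (X \ T) \ W' ⊆ nbrs r X \ (insert w W' : Finset B) := by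
        rintro b ⟨hb, hbW⟩
        have hbS := hnS b hb
        obtain ⟨a, ha, hab⟩ := hb
        refine ⟨⟨a, ha.1, hab⟩, ?_⟩
        simp only [Finset.coe_insert, Set.mem_insert_iff, not_or]
        exact ⟨fun hbw => hbS (hbw ▸ hwS), hbW⟩
      refine ih W' (X \ T) h hW' (hX.sdiff hTfin)
        (fun b => (hlf b).subset fun a ha => ⟨ha.1.1, ha.2⟩) (hinj.mono hsub) fun b hb => ?_
      refine ⟨⟨(hh b (hsub hb)).1, fun hbT => ?_⟩, (hh b (hsub hb)).2⟩
      rw [← hTeq] at hbT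
      obtain ⟨b', hb', hbb⟩ := hbT
      have hb'' := Finset.mem_erase.1 (Finset.mem_coe.1 hb')
      have := hinj (hmem b' hb''.2 hb''.1) (hsub hb) hbb
      exact hnS b hb.1 (this ▸ hb''.2)

/-- The same conclusion with a defect `W` of any cardinality smaller than that of `X`. For infinite
`W`, close `W` under alternating paths; removing the neighbours of the closure leaves a wave. -/
lemma Unhindered.false_of_defect (hU : Unhindered r) {W : Set B} {X : Set A} {h : B → A}
    (hX : ℵ₀ ≤ #X) (hWX : #W < #X) (hlf : ∀ b, {a | a ∈ X ∧ r a b}.Finite)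
    (hinj : Set.InjOn h (nbrs r X \ W)) (hh : ∀ b ∈ nbrs r X \ W, h b ∈ X ∧ r (h b) b) :
    False := by
  classical
  rcases lt_or_ge #W ℵ₀ with hW | hW
  · have hWf := lt_aleph0_iff_set_finite.1 hW
    refine hU.false_of_finite_defect _ hWf.toFinset X h rfl ?_ hlf (by simpa using hinj)
      (by simpa using hh)
    intro hfin
    exact absurd (lt_aleph0_iff_set_finite.2 hfin) (not_lt.2 hX)
  · let next : Set B → Set B := fun C => ⋃ b ∈ C, {b' | b' ∈ nbrs r X \ W ∧ r (h b') b}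
    have hnext : ∀ C : Set B, #C ≤ #W → #(next C) ≤ #W := by
      intro C hC
      refine mk_biUnion_le_of_le hW hC fun b _ => le_trans (le_of_lt ?_) hW
      rw [lt_aleph0_iff_set_finite]
      refine Set.Finite.of_finite_image ((hlf b).subset (t := h '' _) ?_)
        (hinj.mono fun b' hb' => hb'.1)
      rintro _ ⟨b', hb', rfl⟩
      exact ⟨(hh b' hb'.1).1, hb'.2⟩
    let it : ℕ → Set B := fun n => next^[n] W
    have hit : ∀ n, #(it n) ≤ #W := by
      intro n
      induction n with
      | zero => exact le_rfl
      | succ n ih =>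
        show #(next^[n+1] W) ≤ #W
        rw [Function.iterate_succ_apply']
        exact hnext _ ih
    set C : Set B := ⋃ n, it n with hC
    have hCW : #C ≤ #W := by
      have := mk_biUnion_le_of_le (s := (Set.univ : Set (ULift.{u} ℕ)))
        (t := fun n => it n.down) hW (by simpa using hW) (fun n _ => hit _)
      refine (mk_le_mk_of_subset ?_).trans this
      intro b hb
      obtain ⟨n, hn⟩ := Set.mem_iUnion.1 hb
      exact Set.mem_biUnion (Set.mem_univ (ULift.up n)) hn
    have hTW : #(⋃ b ∈ C, {a | a ∈ X ∧ r a b} : Set A) ≤ #W :=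
      mk_biUnion_le_of_le hW hCW fun b _ =>
        ((lt_aleph0_iff_set_finite.2 (hlf b)).le).trans hW
    set T : Set A := ⋃ b ∈ C, {a | a ∈ X ∧ r a b} with hT
    have hne : (X \ T).Nonempty := by
      by_contra hem
      rw [Set.not_nonempty_iff_eq_empty, Set.sdiff_eq_empty] at hem
      exact absurd ((mk_le_mk_of_subset hem).trans hTW) (not_le.2 hWX)
    have hmem : ∀ b ∈ nbrs r (X \ T), b ∈ nbrs r X \ W ∧ b ∉ C := by
      rintro b ⟨a, ha, hab⟩
      have hbC : b ∉ C := fun hb => ha.2 (Set.mem_biUnion hb ⟨ha.1, hab⟩)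
      exact ⟨⟨⟨a, ha.1, hab⟩, fun hbW => hbC (Set.mem_iUnion.2 ⟨0, hbW⟩)⟩, hbC⟩
    refine hne.ne_empty (hU _ ⟨h, hinj.mono fun b hb => (hmem b hb).1, fun b hb => ?_⟩)
    obtain ⟨hb1, hb2⟩ := hmem b hb
    refine ⟨⟨(hh b hb1).1, fun hbT => ?_⟩, (hh b hb1).2⟩
    obtain ⟨c, hc, hbc⟩ := Set.mem_iUnion₂.1 hbT
    obtain ⟨n, hn⟩ := Set.mem_iUnion.1 hc
    refine hb2 (Set.mem_iUnion.2 ⟨n + 1, ?_⟩)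
    show b ∈ next^[n+1] W
    rw [Function.iterate_succ_apply']
    exact Set.mem_biUnion hn ⟨hb1, hbc.2⟩

variable [LinearOrder A] [LinearOrder B]

/-- Only finitely many vertices of finite degree are matched into `N(a)` but have a neighbour above
`N(a)`. Given one of them, `a₁`, every other one is either adjacent to the partner of `a₁` or has its
partner in `N(a₁)`. -/
lemma finite_out_above (hU : Unhindered r) (hM : Crossing r) (hV : ConvexNbrs r) {f : A → B}
    (hf : Set.InjOn f {a | #{b | r a b} < ℵ₀}) (hfr : ∀ a, #{b | r a b} < ℵ₀ → r a (f a)) (a : A) :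
    {x | #{b | r x b} < ℵ₀ ∧ r a (f x) ∧ ∃ c, r x c ∧ ¬ r a c ∧ f x < c}.Finite := by
  rcases Set.eq_empty_or_nonempty
    {x | #{b | r x b} < ℵ₀ ∧ r a (f x) ∧ ∃ c, r x c ∧ ¬ r a c ∧ f x < c} with h | ⟨a₁, h₁⟩
  · rw [h]; exact Set.finite_empty
  · obtain ⟨hd₁, ha₁, c₁, hac₁, hnc₁, hlt₁⟩ := h₁
    have above : ∀ {b b' c}, r a b → r a b' → ¬ r a c → b < c → b' < c := by
      intro b b' c hb hb' hc hlt
      rcases lt_trichotomy b' c with h | h | h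
      · exact h
      · exact absurd (h ▸ hb') hc
      · exact absurd (hV hlt h hb hb') hc
    have fin1 := lt_aleph0_iff_set_finite.1 (hU.mk_lt hM le_rfl (f a₁))
    have fin2 : {x | #{b | r x b} < ℵ₀ ∧ r a₁ (f x)}.Finite := by
      refine Set.Finite.of_finite_image
        ((lt_aleph0_iff_set_finite.1 hd₁).subset (t := f '' _) ?_) (hf.mono fun x hx => hx.1)
      rintro _ ⟨x, hx, rfl⟩
      exact hx.2
    refine (fin1.union fin2).subset ?_
    rintro x ⟨hd, hax, c, hxc, hnc, hlt⟩
    rcases lt_trichotomy x a₁ with h | h | h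
    · exact Or.inl ⟨(hM h (above hax ha₁ hnc hlt) hxc (hfr _ hd₁)).1, hd⟩
    · exact Or.inl ⟨h ▸ hfr x hd, hd⟩
    · exact Or.inr ⟨hd, (hM h (above ha₁ hax hnc₁ hlt₁) hac₁ (hfr _ hd)).1⟩

/-- A matching `f` of the vertices of finite degree leaves `deg a` many elements of `N(a)` unused,
for each `a` of infinite degree. Otherwise `N(a)` consists mostly of partners of vertices `x` with
`N(x) ⊆ N(a)`, and `f⁻¹` matches the neighbourhood of the set of these `x` with a small defect. -/
theorem mk_free_nbrs (hU : Unhindered r) (hM : Crossing r) (hV : ConvexNbrs r) {f : A → B}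
    (hf : Set.InjOn f {a | #{b | r a b} < ℵ₀}) (hfr : ∀ a, #{b | r a b} < ℵ₀ → r a (f a)) {a : A}
    (ha : ℵ₀ ≤ #{b | r a b}) :
    #{b | r a b ∧ b ∉ f '' {a | #{b | r a b} < ℵ₀}} = #{b | r a b} := by
  classical
  set F : Set A := {a | #{b | r a b} < ℵ₀} with hF
  refine le_antisymm (mk_le_mk_of_subset fun b hb => hb.1) (not_lt.1 fun hlt => ?_)
  have out1 := finite_out_above hU hM hV hf hfr a
  have out2 := finite_out_above (A := Aᵒᵈ) (B := Bᵒᵈ) hU hM.dual hV.dual hf hfr a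
  -- `O`: the vertices matched into `N(a)` whose neighbourhood sticks out of `N(a)`
  set O : Set A := {x | #{b | r x b} < ℵ₀ ∧ r a (f x) ∧ ∃ c, r x c ∧ ¬ r a c ∧ f x < c} ∪
    {x | #{b | r x b} < ℵ₀ ∧ r a (f x) ∧ ∃ c, r x c ∧ ¬ r a c ∧ c < f x} with hO
  have hOfin : O.Finite := out1.union out2
  have hOc : #(f '' O) < #{b | r a b} :=
    (lt_aleph0_iff_set_finite.2 (hOfin.image f)).trans_le ha
  set X : Set A := {x | x ∈ F ∧ r a (f x) ∧ ∀ b, r x b → r a b} with hX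
  have hcover : ∀ x ∈ F, r a (f x) → x ∈ X ∨ x ∈ O := by
    intro x hx hax
    by_cases h : ∀ b, r x b → r a b
    · exact Or.inl ⟨hx, hax, h⟩
    · push Not at h
      obtain ⟨c, hxc, hac⟩ := h
      rcases lt_trichotomy (f x) c with h | h | h
      · exact Or.inr (Or.inl ⟨hx, hax, c, hxc, hac, h⟩)
      · exact absurd (h ▸ hax) hac
      · exact Or.inr (Or.inr ⟨hx, hax, c, hxc, hac, h⟩)
  have hXc : #{b | r a b} ≤ #X := by
    by_contra hcon
    refine lt_irrefl #{b | r a b} ?_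
    refine mk_lt_of_subset_union ha (t := {b | r a b ∧ b ∉ f '' F}) (w := f '' O ∪ f '' X) ?_ hlt
      (mk_lt_of_subset_union ha subset_rfl hOc (mk_image_le.trans_lt (not_le.1 hcon)))
    intro b hb
    by_cases hbF : b ∈ f '' F
    · obtain ⟨x, hx, rfl⟩ := hbF
      rcases hcover x hx hb with h | h
      · exact Or.inr (Or.inr ⟨x, h, rfl⟩)
      · exact Or.inr (Or.inl ⟨x, h, rfl⟩)
    · exact Or.inl ⟨hb, hbF⟩
  have : Nonempty A := ⟨a⟩
  have hsub : ∀ b ∈ nbrs r X \ (nbrs r X \ f '' X), ∃ x ∈ X, f x = b := by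
    rintro b ⟨h1, h2⟩
    by_contra hcon
    exact h2 ⟨h1, hcon⟩
  refine hU.false_of_defect (X := X) (W := nbrs r X \ f '' X) (h := Function.invFunOn f X)
    (ha.trans hXc) ?_ ?_ ?_ ?_
  · refine lt_of_lt_of_le ?_ hXc
    refine mk_lt_of_subset_union ha (t := {b | r a b ∧ b ∉ f '' F}) (w := f '' O) ?_ hlt hOc
    rintro b ⟨⟨x, hx, hxb⟩, hbX⟩
    have hab := hx.2.2 b hxb
    by_cases hbF : b ∈ f '' F
    · obtain ⟨y, hy, rfl⟩ := hbF
      rcases hcover y hy hab with h | h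
      · exact absurd ⟨y, h, rfl⟩ hbX
      · exact Or.inr ⟨y, h, rfl⟩
    · exact Or.inl ⟨hab, hbF⟩
  · intro b
    exact (lt_aleph0_iff_set_finite.1 (hU.mk_lt hM le_rfl b)).subset fun x hx => ⟨hx.2, hx.1.1⟩
  · intro b hb b' hb' hbb
    rw [← Function.invFunOn_eq (hsub b hb), ← Function.invFunOn_eq (hsub b' hb'), hbb]
  · intro b hb
    have h1 := Function.invFunOn_mem (hsub b hb)
    have h2 := Function.invFunOn_eq (hsub b hb)
    refine ⟨h1, ?_⟩
    have := hfr _ h1.1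
    rwa [h2] at this

end FiniteDegree

/-! ### Vertices with infinitely many neighbours -/

section InfiniteDegree

lemma mk_lt_of_unique {A B : Type u} {c : Cardinal.{u}} (hc : ℵ₀ ≤ c) {Q : B → Prop}
    {R : B → Set A} (huniq : ∀ s s', Q s → Q s' → s = s') (h : ∀ s, Q s → #(R s) < c) :
    #{a | ∃ s, Q s ∧ a ∈ R s} < c := by
  by_cases hQ : ∃ s, Q s
  · obtain ⟨s, hs⟩ := hQ
    refine (mk_le_mk_of_subset ?_).trans_lt (h s hs)
    rintro a ⟨s', hs', ha⟩
    exact huniq s' s hs' hs ▸ ha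
  · have : {a | ∃ s, Q s ∧ a ∈ R s} = ∅ := by
      refine Set.eq_empty_of_forall_notMem ?_
      rintro a ⟨s, hs, -⟩
      exact hQ ⟨s, hs⟩
    rw [this]
    simpa using aleph0_pos.trans_le hc

lemma nonempty_of_aleph0_le {α : Type u} {s : Set α} (h : ℵ₀ ≤ #s) : s.Nonempty := by
  rw [← Set.nonempty_coe_sort, ← mk_ne_zero_iff]
  exact (aleph0_pos.trans_le h).ne'

lemma mk_le_or_of_subset_union {α : Type u} {s t w : Set α} (hs : ℵ₀ ≤ #s) (h : s ⊆ t ∪ w) :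
    #s ≤ #t ∨ #s ≤ #w := by
  by_contra! hcon
  exact lt_irrefl _ (mk_lt_of_subset_union hs h hcon.1 hcon.2)

variable {A B : Type u} {r : A → B → Prop}

/-- Every neighbourhood `N(a)` contains at most one element of `S`. -/
def Scattered (r : A → B → Prop) (S : Set B) : Prop :=
  ∀ a, ∀ s ∈ S, ∀ s' ∈ S, r a s → r a s' → s = s'

lemma exists_maximal_scattered (r : A → B → Prop) :
    ∃ S : Set B, Scattered r S ∧ ∀ b ∉ S, ∃ s ∈ S, ∃ a, r a s ∧ r a b := by
  obtain ⟨S, hS⟩ := zorn_subset {S : Set B | Scattered r S} (by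
    intro C hC hchain
    refine ⟨⋃₀ C, ?_, fun s hs => Set.subset_sUnion_of_mem hs⟩
    rintro a s ⟨T, hT, hs⟩ s' ⟨T', hT', hs'⟩ h h'
    rcases hchain.total hT hT' with hTT | hTT
    · exact hC hT' a s (hTT hs) s' hs' h h'
    · exact hC hT a s hs s' (hTT hs') h h')
  refine ⟨S, hS.prop, fun b hb => ?_⟩
  by_contra! hcon
  refine hb (hS.le_of_ge (y := insert b S) ?_ (Set.subset_insert b S) (Set.mem_insert b S))
  rintro a s (rfl | hs) s' (rfl | hs') h h'
  · rfl
  · exact absurd h (hcon s' hs' a h')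
  · exact absurd h' (hcon s hs a h)
  · exact hS.prop a s hs s' hs' h h'

variable [LinearOrder B]

/-- The part of `S` strictly below `b`. It serves as a label for the piece of `B` containing `b`
when `B` is cut at the elements of `S`. -/
def cut (S : Set B) (b : B) : Set B := {s | s ∈ S ∧ s < b}

lemma cut_eq_of_lt {S : Set B} (hS : Scattered r S) (hV : ConvexNbrs r) {a : A} {b s : B}
    (hs : s ∈ S) (hab : r a b) (has : r a s) (hbs : b ≤ s) : cut S s = cut S b := by
  refine Set.Subset.antisymm ?_ fun t ht => ⟨ht.1, ht.2.trans_le hbs⟩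
  rintro t ⟨ht, hts⟩
  refine ⟨ht, not_le.1 fun hbt => hts.ne (hS a t ht s hs ?_ has)⟩
  rcases hbt.lt_or_eq with h | rfl
  · exact hV h hts hab has
  · exact hab

lemma isGreatest_cut {S : Set B} (hS : Scattered r S) (hV : ConvexNbrs r) {a : A} {b s : B}
    (hs : s ∈ S) (hab : r a b) (has : r a s) (hsb : s < b) : IsGreatest (cut S b) s := by
  refine ⟨⟨hs, hsb⟩, ?_⟩
  rintro t ⟨ht, htb⟩
  refine not_lt.1 fun hst => hst.ne (hS a s hs t ht has ?_)
  exact hV hst htb has hab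

lemma exists_two_cuts {S : Set B} (hS : Scattered r S) (hV : ConvexNbrs r) (a : A) :
    ∃ k₁ k₂ : Set B, ∀ b, r a b → cut S b = k₁ ∨ cut S b = k₂ := by
  by_cases h : ∃ s ∈ S, r a s
  · obtain ⟨s, hs, has⟩ := h
    refine ⟨cut S s, {t | t ∈ S ∧ t ≤ s}, fun b hab => ?_⟩
    rcases le_or_gt b s with hbs | hsb
    · exact Or.inl (cut_eq_of_lt hS hV hs hab has hbs).symm
    · refine Or.inr (Set.Subset.antisymm ?_ fun t ht => ⟨ht.1, ht.2.trans_lt hsb⟩)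
      exact fun t ht => ⟨ht.1, (isGreatest_cut hS hV hs hab has hsb).2 ht⟩
  · push Not at h
    have key : ∀ b b', r a b → r a b' → b < b' → cut S b' = cut S b := by
      intro b b' hab hab' hbb
      refine Set.Subset.antisymm ?_ fun t ht => ⟨ht.1, ht.2.trans hbb⟩
      rintro t ⟨ht, htb⟩
      refine ⟨ht, not_le.1 fun hbt => h t ht ?_⟩
      rcases hbt.lt_or_eq with h | rfl
      · exact hV h htb hab hab'
      · exact hab
    by_cases hb : ∃ b, r a b
    · obtain ⟨b₀, hb₀⟩ := hb
      refine ⟨cut S b₀, cut S b₀, fun b hab => Or.inl ?_⟩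
      rcases lt_trichotomy b b₀ with h | h | h
      · exact (key b b₀ hab hb₀ h).symm
      · rw [h]
      · exact key b₀ b hb₀ hab h
    · exact ⟨∅, ∅, fun b hab => absurd ⟨b, hab⟩ hb⟩

variable [LinearOrder A]

/-- Suppose every `a ∈ F` has infinite degree and has `deg a` many neighbours in `E`, and that the
sets `N(a) ∩ E` are nested. Then fewer than `c` elements of `F` have degree less than `c`. Compare
with `a₀ ∈ F` of least degree: larger neighbourhoods share a fixed vertex, and smaller ones belong
to neighbours of the `deg a₀` many elements of `N(a₀)`. -/
lemma mk_lt_of_nested (hU : Unhindered r) (hM : Crossing r) {F : Set A} {E : Set B}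
    (hinf : ∀ a ∈ F, ℵ₀ ≤ #{b | r a b}) (hE : ∀ a ∈ F, #{b | r a b} ≤ #{b | r a b ∧ b ∈ E})
    (hnest : ∀ a ∈ F, ∀ a' ∈ F, (∀ b ∈ E, r a b → r a' b) ∨ ∀ b ∈ E, r a' b → r a b)
    {c : Cardinal.{u}} (hc : ℵ₀ ≤ c) : #{a | a ∈ F ∧ #{b | r a b} < c} < c := by
  have hempty : {a | a ∈ F ∧ #{b | r a b} < c} = ∅ → #{a | a ∈ F ∧ #{b | r a b} < c} < c := by
    intro h
    rw [h]
    simpa using aleph0_pos.trans_le hc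
  rcases F.eq_empty_or_nonempty with hF | hF
  · exact hempty (by simp [hF])
  have hne : ∀ a ∈ F, ∃ b, r a b ∧ b ∈ E := by
    intro a ha
    exact nonempty_of_aleph0_le ((hinf a ha).trans (hE a ha))
  obtain ⟨a₀, ha₀, hmin⟩ : ∃ a₀ ∈ F, ∀ a ∈ F, #{b | r a₀ b} ≤ #{b | r a b} := by
    obtain ⟨a₀, ha₀, h⟩ := (InvImage.wf (fun a => #{b | r a b}) Cardinal.lt_wf).has_min F hF
    exact ⟨a₀, ha₀, fun a ha => not_lt.1 (h a ha)⟩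
  rcases le_or_gt c #{b | r a₀ b} with hca | hca
  · refine hempty (Set.eq_empty_of_forall_notMem ?_)
    rintro a ⟨ha, hlt⟩
    exact absurd (hlt.trans_le hca) (not_lt.2 (hmin a ha))
  obtain ⟨b₀, hab₀, hbE⟩ := hne a₀ ha₀
  refine mk_lt_of_subset_union hc (t := {a | r a b₀ ∧ #{b | r a b} < c})
    (w := ⋃ b ∈ {b | r a₀ b}, {a | r a b ∧ #{b | r a b} < Order.succ #{b | r a₀ b}})
    ?_ (hU.mk_lt hM hc b₀) (lt_of_le_of_lt (mk_biUnion_le_of_le (hinf _ ha₀) le_rfl fun b _ => ?_) hca)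
  · rintro a ⟨ha, hac⟩
    rcases hnest a ha a₀ ha₀ with h | h
    · obtain ⟨b, hab, hb⟩ := hne a ha
      refine Or.inr (Set.mem_biUnion (h b hb hab) ⟨hab, Order.lt_succ_of_le ?_⟩)
      exact (hE a ha).trans (mk_le_mk_of_subset fun b hb => h b hb.2 hb.1)
    · exact Or.inl ⟨h b₀ hbE hab₀, hac⟩
  · exact Order.le_of_lt_succ (hU.mk_lt hM ((hinf _ ha₀).trans (Order.le_succ _)) b)

/-- Let `E` be the set of all `b > s` that have a common neighbour with `s`. If `a` is not adjacent
to `s`, then `N(a) ∩ E` is a final segment of `E`, so these sets are nested. -/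
lemma mk_lt_of_link_above (hU : Unhindered r) (hM : Crossing r) (s : B) {c : Cardinal.{u}}
    (hc : ℵ₀ ≤ c) :
    #{a | (¬ r a s ∧ ℵ₀ ≤ #{b | r a b} ∧
      #{b | r a b} ≤ #{b | r a b ∧ b ∈ {b | s < b ∧ ∃ a', r a' s ∧ r a' b}}) ∧
      #{b | r a b} < c} < c := by
  have hup : ∀ a, ¬ r a s → ∀ y y', s < y → r a y → y < y' → (∃ a', r a' s ∧ r a' y') →
      r a y' := by
    rintro a has y y' hsy hay hyy ⟨a', hs', hy'⟩
    rcases lt_trichotomy a a' with h | h | h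
    · exact absurd (hM h hsy hay hs').1 has
    · exact h ▸ hy'
    · exact (hM h hyy hy' hay).2
  refine mk_lt_of_nested hU hM
    (F := {a | ¬ r a s ∧ ℵ₀ ≤ #{b | r a b} ∧
      #{b | r a b} ≤ #{b | r a b ∧ b ∈ {b | s < b ∧ ∃ a', r a' s ∧ r a' b}}})
    (E := {b | s < b ∧ ∃ a', r a' s ∧ r a' b})
    (fun a ha => ha.2.1) (fun a ha => ha.2.2) ?_ hc
  intro a ha a' ha'
  by_contra! hcon
  obtain ⟨⟨b, hb, hab, hab'⟩, ⟨b', hb', ha'b', hanb'⟩⟩ := hcon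
  rcases lt_trichotomy b b' with h | h | h
  · exact hanb' (hup a ha.1 b b' hb.1 hab h hb'.2)
  · exact hanb' (h ▸ hab)
  · exact hab' (hup a' ha'.1 b' b hb'.1 ha'b' h hb.2)

/-- Among the vertices of infinite degree with full degree into the piece labelled `k`, fewer than
`c` have degree less than `c`. The anchors are the greatest element of `k` and the `s ∈ S` with
`cut S s = k`; each exists at most once. A vertex with a neighbour in `S` is adjacent to an anchor.
For any other vertex, maximality of `S` puts each neighbour in the piece into the link of an
anchor. -/
lemma mk_lt_of_cut (hU : Unhindered r) (hM : Crossing r) (hV : ConvexNbrs r) {S : Set B}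
    (hS : Scattered r S) (hmax : ∀ b ∉ S, ∃ s ∈ S, ∃ a, r a s ∧ r a b) (k : Set B)
    {c : Cardinal.{u}} (hc : ℵ₀ ≤ c) :
    #{a | (ℵ₀ ≤ #{b | r a b} ∧ #{b | r a b} ≤ #{b | r a b ∧ cut S b = k}) ∧ #{b | r a b} < c}
      < c := by
  have huniq₁ : ∀ s s', IsGreatest k s → IsGreatest k s' → s = s' :=
    fun s s' h h' => h.unique h'
  have huniq₂ : ∀ s s', (s ∈ S ∧ cut S s = k) → (s' ∈ S ∧ cut S s' = k) → s = s' := by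
    rintro s s' ⟨hs, hk⟩ ⟨hs', hk'⟩
    rcases lt_trichotomy s s' with h | h | h
    · have : s ∈ cut S s' := ⟨hs, h⟩
      rw [hk', ← hk] at this
      exact absurd this.2 (lt_irrefl _)
    · exact h
    · have : s' ∈ cut S s := ⟨hs', h⟩
      rw [hk, ← hk'] at this
      exact absurd this.2 (lt_irrefl _)
  have h₁ := mk_lt_of_unique hc huniq₁ (fun s _ => hU.mk_lt hM hc s)
  have h₂ := mk_lt_of_unique hc huniq₂ (fun s _ => hU.mk_lt hM hc s)
  have h₃ := mk_lt_of_unique hc huniq₁ (fun s _ => mk_lt_of_link_above hU hM s hc)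
  have h₄ := mk_lt_of_unique hc huniq₂
    (fun s _ => mk_lt_of_link_above (A := Aᵒᵈ) (B := Bᵒᵈ) hU hM.dual s hc)
  refine mk_lt_of_subset_union hc ?_ (mk_lt_of_subset_union hc subset_rfl h₁ h₂)
    (mk_lt_of_subset_union hc subset_rfl h₃ h₄)
  rintro a ⟨⟨hinf, hk⟩, hac⟩
  have hinfk := hinf.trans hk
  have hne : ∃ b, r a b ∧ cut S b = k := nonempty_of_aleph0_le hinfk
  by_cases hSa : ∃ s ∈ S, r a s
  · obtain ⟨s, hs, has⟩ := hSa
    obtain ⟨b, hab, hbk⟩ := hne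
    left
    rcases le_or_gt b s with hbs | hsb
    · exact Or.inr ⟨s, ⟨hs, (cut_eq_of_lt hS hV hs hab has hbs).trans hbk⟩, has, hac⟩
    · exact Or.inl ⟨s, hbk ▸ isGreatest_cut hS hV hs hab has hsb, has, hac⟩
  · push Not at hSa
    right
    have hcov : {b | r a b ∧ cut S b = k} ⊆
        {b | r a b ∧ ∃ s, IsGreatest k s ∧ s < b ∧ ∃ a', r a' s ∧ r a' b} ∪
        {b | r a b ∧ ∃ s, (s ∈ S ∧ cut S s = k) ∧ b < s ∧ ∃ a', r a' s ∧ r a' b} := by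
      rintro b ⟨hab, hbk⟩
      obtain ⟨s, hs, a', has', hab'⟩ := hmax b fun hb => hSa b hb hab
      rcases lt_trichotomy s b with h | h | h
      · exact Or.inl ⟨hab, s, hbk ▸ isGreatest_cut hS hV hs hab' has' h, h, a', has', hab'⟩
      · exact absurd (h ▸ hab) (hSa s hs)
      · exact Or.inr ⟨hab, s, ⟨hs, (cut_eq_of_lt hS hV hs hab' has' h.le).trans hbk⟩, h, a',
          has', hab'⟩
    rcases mk_le_or_of_subset_union hinfk hcov with h | h
    · left
      obtain ⟨_, _, s, hs, _⟩ := nonempty_of_aleph0_le (hinfk.trans h)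
      refine ⟨s, hs, ⟨hSa s ?_, hinf, hk.trans (h.trans (mk_le_mk_of_subset ?_))⟩, hac⟩
      · obtain ⟨b, _, hbk⟩ := hne
        exact (hbk ▸ hs.1 : s ∈ cut S b).1
      · rintro b ⟨hab, s', hs', hlt, hlink⟩
        obtain rfl := huniq₁ s s' hs hs'
        exact ⟨hab, hlt, hlink⟩
    · right
      obtain ⟨_, _, s, hs, _⟩ := nonempty_of_aleph0_le (hinfk.trans h)
      refine ⟨s, hs, ⟨hSa s hs.1, hinf, hk.trans (h.trans (mk_le_mk_of_subset ?_))⟩, hac⟩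
      rintro b ⟨hab, s', hs', hlt, hlink⟩
      obtain rfl := huniq₂ s s' hs hs'
      exact ⟨hab, hlt, hlink⟩

/-- An unhindered graph with the two order properties has a matching covering `A`. -/
theorem Unhindered.exists_matching (hU : Unhindered r) (hM : Crossing r) (hV : ConvexNbrs r) :
    ∃ f : A → B, Function.Injective f ∧ ∀ a, r a (f a) := by
  classical
  rcases isEmpty_or_nonempty A with hA | hA
  · exact ⟨fun a => hA.elim a, fun a => hA.elim a, fun a => hA.elim a⟩
  have : Nonempty B := nonempty_right hU
  obtain ⟨f, hf, hfr⟩ := hU.exists_matching_finite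
  obtain ⟨S, hS, hmax⟩ := exists_maximal_scattered r
  set F : Set A := {a | #{b | r a b} < ℵ₀} with hF
  have hcut : ∀ a, ∃ k : Set B, ℵ₀ ≤ #{b | r a b} →
      #{b | r a b} ≤ #{b | r a b ∧ b ∉ f '' F ∧ cut S b = k} := by
    intro a
    by_cases ha : ℵ₀ ≤ #{b | r a b}
    · have hfree := mk_free_nbrs hU hM hV hf hfr ha
      obtain ⟨k₁, k₂, hk⟩ := exists_two_cuts hS hV a
      have hsub : {b | r a b ∧ b ∉ f '' F} ⊆
          {b | r a b ∧ b ∉ f '' F ∧ cut S b = k₁} ∪ {b | r a b ∧ b ∉ f '' F ∧ cut S b = k₂} := by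
        rintro b ⟨hab, hb⟩
        rcases hk b hab with h | h
        · exact Or.inl ⟨hab, hb, h⟩
        · exact Or.inr ⟨hab, hb, h⟩
      rcases mk_le_or_of_subset_union (hfree ▸ ha) hsub with h | h
      · exact ⟨k₁, fun _ => hfree ▸ h⟩
      · exact ⟨k₂, fun _ => hfree ▸ h⟩
    · exact ⟨∅, fun h => absurd h ha⟩
  choose K hK using hcut
  have hg : ∀ k : Set B, ∃ g : {a // ℵ₀ ≤ #{b | r a b} ∧ K a = k} → B, Function.Injective g ∧
      ∀ a, g a ∈ {b | r a.1 b ∧ b ∉ f '' F ∧ cut S b = k} := by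
    intro k
    have hle : ∀ a : {a // ℵ₀ ≤ #{b | r a b} ∧ K a = k},
        #{b | r a.1 b} ≤ #{b | r a.1 b ∧ b ∉ f '' F ∧ cut S b = k} := by
      rintro ⟨a, ha, rfl⟩
      exact hK a ha
    refine exists_injective_of_card_lt _ (fun a => a.2.1.trans (hle a)) fun c hc => ?_
    refine lt_of_le_of_lt ?_ (mk_lt_of_cut hU hM hV hS hmax k hc)
    refine Cardinal.mk_le_of_injective (f := fun a => ⟨a.1.1, ⟨a.1.2.1, (hle a.1).trans
      (mk_le_mk_of_subset fun b hb => ⟨hb.1, hb.2.2⟩)⟩, (hle a.1).trans_lt a.2⟩) ?_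
    rintro ⟨⟨a, _⟩, _⟩ ⟨⟨a', _⟩, _⟩ haa
    simpa using haa
  choose g hginj hgmem using hg
  have hnF : ∀ a, a ∉ F → ℵ₀ ≤ #{b | r a b} ∧ K a = K a := fun a ha => ⟨not_lt.1 ha, rfl⟩
  let m : A → B := fun a => if ha : a ∈ F then f a else g (K a) ⟨a, hnF a ha⟩
  have hmF : ∀ a, a ∈ F → m a = f a := fun a ha => dif_pos ha
  have hmI : ∀ a (ha : a ∉ F), m a = g (K a) ⟨a, hnF a ha⟩ := fun a ha => dif_neg ha
  have hgK : ∀ a k (ha : a ∉ F) (hk : K a = k), m a = g k ⟨a, not_lt.1 ha, hk⟩ := by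
    intro a k ha hk
    subst hk
    exact hmI a ha
  refine ⟨m, ?_, ?_⟩
  · intro a a' haa
    by_cases ha : a ∈ F <;> by_cases ha' : a' ∈ F
    · rw [hmF a ha, hmF a' ha'] at haa
      exact hf ha ha' haa
    · rw [hmF a ha, hmI a' ha'] at haa
      exact absurd ⟨a, ha, haa⟩ (hgmem _ _).2.1
    · rw [hmF a' ha', hmI a ha] at haa
      exact absurd ⟨a', ha', haa.symm⟩ (hgmem _ _).2.1
    · have hKK : K a = K a' := by
        have h1 := (hgmem _ ⟨a, hnF a ha⟩).2.2
        have h2 := (hgmem _ ⟨a', hnF a' ha'⟩).2.2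
        rw [← hmI a ha] at h1
        rw [← hmI a' ha'] at h2
        rw [← h1, ← h2, haa]
      rw [hgK a (K a') ha hKK, hgK a' (K a') ha' rfl] at haa
      exact congrArg Subtype.val (hginj _ haa)
  · intro a
    by_cases ha : a ∈ F
    · rw [hmF a ha]; exact hfr a ha
    · rw [hmI a ha]; exact (hgmem _ ⟨a, hnF a ha⟩).1

end InfiniteDegree

/-! ### Maximal waves and the duality theorem -/

section Konig

variable {A B : Type u} {r : A → B → Prop}

/-- The union of all waves is a wave: well-order the waves and match each `b` by the first wave that
has `b` as a neighbour. -/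
theorem exists_max_wave [Nonempty A] (r : A → B → Prop) :
    ∃ X, IsWave r X ∧ ∀ Y, IsWave r Y → Y ⊆ X := by
  classical
  let ι := {X : Set A // IsWave r X}
  have hwf : WellFounded (WellOrderingRel : ι → ι → Prop) := WellOrderingRel.isWellOrder.wf
  choose h hinj hh using fun i : ι => i.2
  set X : Set A := ⋃ i : ι, i.1 with hX
  have hex : ∀ b ∈ nbrs r X, {i : ι | b ∈ nbrs r i.1}.Nonempty := by
    rintro b ⟨a, ha, hab⟩
    obtain ⟨i, hi⟩ := Set.mem_iUnion.1 ha
    exact ⟨i, a, hi, hab⟩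
  have hfirst : ∀ b, ∃ i : ι, b ∈ nbrs r X →
      b ∈ nbrs r i.1 ∧ ∀ j : ι, b ∈ nbrs r j.1 → ¬ WellOrderingRel j i := by
    intro b
    by_cases hb : b ∈ nbrs r X
    · exact ⟨hwf.min _ (hex b hb), fun _ => ⟨hwf.min_mem _ (hex b hb),
        fun j hj => hwf.not_lt_min _ hj⟩⟩
    · exact ⟨⟨∅, fun _ => Classical.arbitrary A, by rintro b ⟨a, ha, -⟩; exact ha.elim,
        by rintro b ⟨a, ha, -⟩; exact ha.elim⟩, fun h => absurd h hb⟩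
  choose i hi using hfirst
  refine ⟨X, ⟨fun b => h (i b) b, ?_, ?_⟩, fun Y hY => Set.subset_iUnion_of_subset ⟨Y, hY⟩ subset_rfl⟩
  · intro b hb b' hb' hbb
    have h1 := hh (i b) b (hi b hb).1
    have h2 := hh (i b') b' (hi b' hb').1
    have hbb' : h (i b) b = h (i b') b' := hbb
    have hii : i b = i b' := by
      have n1 := (hi b' hb').2 (i b) ⟨_, h1.1, hbb' ▸ h2.2⟩
      have n2 := (hi b hb).2 (i b') ⟨_, h2.1, hbb' ▸ h1.2⟩
      rcases trichotomous_of WellOrderingRel (i b) (i b') with h | h | h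
      · exact absurd h n1
      · exact h
      · exact absurd h n2
    rw [← hii] at hbb'
    exact hinj (i b) (hi b hb).1 (hii ▸ (hi b' hb').1) hbb'
  · intro b hb
    have h1 := hh (i b) b (hi b hb).1
    exact ⟨Set.mem_iUnion.2 ⟨i b, h1.1⟩, h1.2⟩

lemma unhindered_of_max [Nonempty A] {X : Set A} (hX : IsWave r X)
    (hmax : ∀ Y, IsWave r Y → Y ⊆ X) :
    Unhindered (fun (a : {a // a ∉ X}) (b : {b // b ∉ nbrs r X}) => r a.1 b.1) := by
  classical
  rintro Y ⟨h', hinj', hh'⟩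
  obtain ⟨h, hinj, hh⟩ := hX
  have hmem : ∀ b ∈ nbrs r (X ∪ Subtype.val '' Y), ∀ hb : b ∉ nbrs r X,
      (⟨b, hb⟩ : {b // b ∉ nbrs r X}) ∈
        nbrs (fun (a : {a // a ∉ X}) (b : {b // b ∉ nbrs r X}) => r a.1 b.1) Y := by
    rintro b ⟨a, ha, hab⟩ hb
    rcases ha with ha | ⟨a, ha, rfl⟩
    · exact absurd ⟨a, ha, hab⟩ hb
    · exact ⟨a, ha, hab⟩
  have hw : IsWave r (X ∪ Subtype.val '' Y) := by
    refine ⟨fun b => if hb : b ∈ nbrs r X then h b else (h' ⟨b, hb⟩).1, ?_, ?_⟩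
    · intro b hbn b' hbn' hbb
      by_cases hb : b ∈ nbrs r X <;> by_cases hb' : b' ∈ nbrs r X <;>
        simp only [hb, hb', dite_true, dite_false] at hbb
      · exact hinj hb hb' hbb
      · exact absurd (hbb ▸ (hh b hb).1) (h' ⟨b', hb'⟩).2
      · exact absurd (hbb ▸ (hh b' hb').1) (h' ⟨b, hb⟩).2
      · exact congrArg Subtype.val
          (hinj' (hmem b hbn hb) (hmem b' hbn' hb') (Subtype.ext hbb))
    · intro b hbn
      by_cases hb : b ∈ nbrs r X
      · simp only [hb, dite_true]
        exact ⟨Or.inl (hh b hb).1, (hh b hb).2⟩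
      · simp only [hb, dite_false]
        have := hh' _ (hmem b hbn hb)
        exact ⟨Or.inr ⟨_, this.1, rfl⟩, this.2⟩
  refine Set.eq_empty_of_forall_notMem fun a ha => a.2 ?_
  exact hmax _ hw (Or.inr ⟨a, ha, rfl⟩)

/-- König duality: `nbrs r X` is matched into `X`, and `A \ X` is matched into `B \ nbrs r X`. -/
theorem konig [LinearOrder A] [LinearOrder B] (hM : Crossing r) (hV : ConvexNbrs r) :
    ∃ X : Set A,
      (∃ h : {b // b ∈ nbrs r X} → A, Function.Injective h ∧ ∀ b, h b ∈ X ∧ r (h b) b.1) ∧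
      ∃ f : {a // a ∉ X} → B, Function.Injective f ∧ ∀ a, f a ∉ nbrs r X ∧ r a.1 (f a) := by
  rcases isEmpty_or_nonempty A with hA | hA
  · have : ∀ b, b ∉ nbrs r (∅ : Set A) := by
      rintro b ⟨a, ha, -⟩
      exact ha
    exact ⟨∅, ⟨fun b => absurd b.2 (this b.1), fun b => absurd b.2 (this b.1),
      fun b => absurd b.2 (this b.1)⟩, fun a => hA.elim a.1, fun a => hA.elim a.1,
      fun a => hA.elim a.1⟩
  obtain ⟨X, hX, hmax⟩ := exists_max_wave r
  have hU := unhindered_of_max hX hmax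
  obtain ⟨f, hf, hfr⟩ := hU.exists_matching (fun a a' b b' h1 h2 h3 h4 => hM h1 h2 h3 h4)
    (fun a b b' b'' h1 h2 h3 h4 => hV h1 h2 h3 h4)
  obtain ⟨h, hinj, hh⟩ := hX
  refine ⟨X, ⟨fun b => h b.1, fun b b' hbb => Subtype.ext (hinj b.2 b'.2 hbb),
    fun b => hh b.1 b.2⟩, fun a => (f a).1, fun a a' haa => hf (Subtype.ext haa),
    fun a => ⟨(f a).2, hfr a⟩⟩

end Konig

/-! ### Covering by two chains, and the conclusion -/

section Dilworth

variable {P : Type u} [PartialOrder P]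

/-- Incomparability in a partial order. -/
def Incomp (x y : P) : Prop := ¬ x ≤ y ∧ ¬ y ≤ x

/-- Dilworth's theorem for finite sets of width at most two, by Galvin's induction: remove a maximal
element `m`, and let `t i` be the greatest element of the `i`-th chain that is incomparable to
something. One `t i` lies below `m`, and the part of its chain up to `t i`, together with `m`, is one
of the two new chains. -/
lemma exists_coloring_finset (h3 : ∀ x y z : P, Incomp x y → Incomp x z → Incomp y z → False)
    (n : ℕ) : ∀ s : Finset P, s.card = n →
      ∃ c : P → Bool, ∀ x ∈ s, ∀ y ∈ s, Incomp x y → c x ≠ c y := by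
  classical
  induction n with
  | zero =>
    intro s hs
    rw [Finset.card_eq_zero] at hs
    subst hs
    exact ⟨fun _ => true, by simp⟩
  | succ n ih =>
    intro s hs
    obtain ⟨m, hm⟩ := s.exists_maximal (Finset.card_pos.1 (by omega))
    obtain ⟨c, hc⟩ := ih (s.erase m) (by rw [Finset.card_erase_of_mem hm.prop]; omega)
    by_cases hpair : ∃ x ∈ s.erase m, ∃ y ∈ s.erase m, Incomp x y
    · have hne : ∀ i : Bool, ((s.erase m).filter
          fun x => c x = i ∧ ∃ y ∈ s.erase m, Incomp x y).Nonempty := by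
        intro i
        obtain ⟨x, hx, y, hy, hxy⟩ := hpair
        by_cases hi : c x = i
        · exact ⟨x, Finset.mem_filter.2 ⟨hx, hi, y, hy, hxy⟩⟩
        · refine ⟨y, Finset.mem_filter.2 ⟨hy, ?_, x, hx, hxy.2, hxy.1⟩⟩
          have := hc x hx y hy hxy
          revert hi this
          cases c x <;> cases c y <;> cases i <;> simp
      have htop : ∀ i : Bool, ∃ t, (t ∈ s.erase m ∧ c t = i ∧ ∃ y ∈ s.erase m, Incomp t y) ∧
          ∀ x ∈ s.erase m, c x = i → (∃ y ∈ s.erase m, Incomp x y) → x ≤ t := by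
        intro i
        obtain ⟨t, ht⟩ := Finset.exists_maximal (hne i)
        have htm := Finset.mem_filter.1 ht.prop
        refine ⟨t, htm, fun x hx hxi hxy => ?_⟩
        by_contra hxt
        by_cases htx : t ≤ x
        · exact hxt (ht.le_of_ge (Finset.mem_filter.2 ⟨hx, hxi, hxy⟩) htx)
        · exact hc x hx t htm.1 ⟨hxt, htx⟩ (hxi.trans htm.2.1.symm)
      choose t ht htmax using htop
      have hnle : ∀ i, ¬ t i ≤ t (!i) := by
        intro i hle
        obtain ⟨y, hy, hty⟩ := (ht (!i)).2.2
        have hcy : c y = i := by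
          have h1 := hc _ (ht (!i)).1 y hy hty
          rw [(ht (!i)).2.1] at h1
          revert h1
          cases c y <;> cases i <;> simp
        exact hty.2 ((htmax i y hy hcy ⟨_, (ht (!i)).1, hty.2, hty.1⟩).trans hle)
      obtain ⟨i, hi⟩ : ∃ i, t i ≤ m := by
        by_contra! hcon
        have hmt : ∀ i, ¬ m ≤ t i := fun i hle =>
          hcon i (hm.le_of_ge (Finset.mem_of_mem_erase (ht i).1) hle)
        exact h3 (t true) (t false) m ⟨hnle true, hnle false⟩ ⟨hcon _, hmt _⟩ ⟨hcon _, hmt _⟩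
      refine ⟨fun z => decide (z = m ∨ (c z = i ∧ z ≤ t i)), ?_⟩
      intro x hx y hy hxy hcol
      rw [decide_eq_decide] at hcol
      by_cases hxK : x = m ∨ (c x = i ∧ x ≤ t i)
      · have hyK := hcol.1 hxK
        rcases hxK with rfl | ⟨hxi, hxt⟩
        · rcases hyK with rfl | ⟨-, hyt⟩
          · exact hxy.1 le_rfl
          · exact hxy.2 (hyt.trans hi)
        · rcases hyK with rfl | ⟨hyi, hyt⟩
          · exact hxy.1 (hxt.trans hi)
          · by_cases hxm : x = m
            · exact hxy.2 (hyt.trans (hxm ▸ hi))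
            by_cases hym : y = m
            · exact hxy.1 (hxt.trans (hym ▸ hi))
            exact hc x (Finset.mem_erase.2 ⟨hxm, hx⟩) y (Finset.mem_erase.2 ⟨hym, hy⟩) hxy
              (hxi.trans hyi.symm)
      · have hyK : ¬ (y = m ∨ (c y = i ∧ y ≤ t i)) := fun h => hxK (hcol.2 h)
        push Not at hxK hyK
        have hx' : x ∈ s.erase m := Finset.mem_erase.2 ⟨hxK.1, hx⟩
        have hy' : y ∈ s.erase m := Finset.mem_erase.2 ⟨hyK.1, hy⟩
        have hne := hc x hx' y hy' hxy
        have hxi : c x ≠ i := fun h => hxK.2 h (htmax i x hx' h ⟨y, hy', hxy⟩)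
        have hyi : c y ≠ i := fun h => hyK.2 h (htmax i y hy' h ⟨x, hx', hxy.2, hxy.1⟩)
        revert hne hxi hyi
        cases c x <;> cases c y <;> cases i <;> simp
    · refine ⟨fun z => decide (z = m), ?_⟩
      intro x hx y hy hxy hcol
      rw [decide_eq_decide] at hcol
      by_cases hxm : x = m
      · exact hxy.1 (by rw [hxm, hcol.1 hxm])
      · exact hpair ⟨x, Finset.mem_erase.2 ⟨hxm, hx⟩, y,
          Finset.mem_erase.2 ⟨fun h => hxm (hcol.2 h), hy⟩, hxy⟩

theorem exists_coloring (h3 : ∀ x y z : P, Incomp x y → Incomp x z → Incomp y z → False) :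
    ∃ c : P → Bool, ∀ x y, Incomp x y → c x ≠ c y := by
  classical
  choose g hg using fun s : Finset P => exists_coloring_finset h3 s.card s rfl
  obtain ⟨c, hc⟩ := Finset.rado_selection g
  refine ⟨c, fun x y hxy => ?_⟩
  obtain ⟨t, hst, ht⟩ := hc {x, y}
  rw [ht x (by simp), ht y (by simp)]
  exact hg t x (hst (by simp)) y (hst (by simp)) hxy

/-- The fibres of a retraction `m` onto a chain `C` form the required partition if `m` is injective
off `C` and moves each element to an incomparable one. -/
lemma exists_fishbone_of_retraction {C : Set P} {m : P → P} (hC : IsChain (· ≤ ·) C)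
    (hmC : ∀ p, m p ∈ C) (hfix : ∀ p ∈ C, m p = p) (hinc : ∀ p ∉ C, Incomp p (m p))
    (hinj : Set.InjOn m Cᶜ) :
    ∃ (C : Set P) (D : Set (Set P)), IsChain (· ≤ ·) C ∧ Setoid.IsPartition D ∧
      (∀ T ∈ D, IsAntichain (· ≤ ·) T) ∧ (∀ T ∈ D, (T ∩ C).Nonempty) := by
  refine ⟨C, (Setoid.ker m).classes, hC, Setoid.isPartition_classes _, ?_, ?_⟩
  · rintro T ⟨q, rfl⟩ x hx y hy hxy hle
    have hmm : m x = m y := (show m x = m q from hx).trans (show m y = m q from hy).symm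
    by_cases hxC : x ∈ C <;> by_cases hyC : y ∈ C
    · exact hxy (by rw [← hfix x hxC, ← hfix y hyC, hmm])
    · rw [hfix x hxC] at hmm
      exact (hinc y hyC).2 (hmm ▸ hle)
    · rw [hfix y hyC] at hmm
      exact (hinc x hxC).1 (hmm ▸ hle)
    · exact hxy (hinj hxC hyC hmm)
  · rintro T ⟨q, rfl⟩
    exact ⟨m q, show m (m q) = m q from hfix _ (hmC q), hmC q⟩

theorem exists_fishbone (h3 : ∀ x y z : P, Incomp x y → Incomp x z → Incomp y z → False) :
    ∃ (C : Set P) (D : Set (Set P)), IsChain (· ≤ ·) C ∧ Setoid.IsPartition D ∧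
      (∀ T ∈ D, IsAntichain (· ≤ ·) T) ∧ (∀ T ∈ D, (T ∩ C).Nonempty) := by
  classical
  obtain ⟨c, hc⟩ := exists_coloring h3
  have htot : ∀ x y : P, c x = c y → x ≤ y ∨ y ≤ x := by
    intro x y hxy
    by_contra! hcon
    exact hc x y hcon hxy
  let _ : LinearOrder {p // c p = true} :=
    { (inferInstance : PartialOrder {p // c p = true}) with
      le_total := fun x y => htot x.1 y.1 (x.2.trans y.2.symm)
      toDecidableLE := Classical.decRel _ }
  let _ : LinearOrder {p // c p = false} :=
    { (inferInstance : PartialOrder {p // c p = false}) with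
      le_total := fun x y => htot x.1 y.1 (x.2.trans y.2.symm)
      toDecidableLE := Classical.decRel _ }
  let r : {p // c p = true} → {p // c p = false} → Prop := fun a b => Incomp a.1 b.1
  have hM : Crossing r := by
    intro a a' b b' ha hb h1 h2
    have ha' : a.1 ≤ a'.1 := ha.le
    have hb' : b.1 ≤ b'.1 := hb.le
    exact ⟨⟨fun h => h1.1 (h.trans hb'), fun h => h2.2 (h.trans ha')⟩,
      ⟨fun h => h1.1 (ha'.trans h), fun h => h2.2 (hb'.trans h)⟩⟩
  have hV : ConvexNbrs r := by
    intro a b b' b'' h1 h2 h3 h4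
    have h1' : b.1 ≤ b'.1 := h1.le
    have h2' : b'.1 ≤ b''.1 := h2.le
    exact ⟨fun h => h4.1 (h.trans h2'), fun h => h3.2 (h1'.trans h)⟩
  obtain ⟨X, ⟨h, hinj, hh⟩, f, hfinj, hf⟩ := konig hM hV
  have hfalse : ∀ {p}, ¬ c p = true → c p = false := fun hp => Bool.eq_false_iff.2 hp
  let m : P → P := fun p =>
    if hp : c p = true then
      if hX : ⟨p, hp⟩ ∈ X then p else (f ⟨⟨p, hp⟩, hX⟩).1
    else
      if hN : ⟨p, hfalse hp⟩ ∈ nbrs r X then (h ⟨⟨p, hfalse hp⟩, hN⟩).1 else p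
  have hmX : ∀ a : {p // c p = true}, a ∈ X → m a.1 = a.1 := by
    rintro ⟨p, hp⟩ ha
    simp only [m, hp, ha, dite_true]
  have hmf : ∀ (a : {p // c p = true}) (ha : a ∉ X), m a.1 = (f ⟨a, ha⟩).1 := by
    rintro ⟨p, hp⟩ ha
    simp only [m, hp, ha, dite_true, dite_false]
  have hmN : ∀ (b : {p // c p = false}) (hb : b ∈ nbrs r X), m b.1 = (h ⟨b, hb⟩).1 := by
    rintro ⟨p, hp⟩ hb
    have hp' : ¬ c p = true := by simp [hp]
    exact (dif_neg hp').trans (dif_pos hb)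
  have hmB : ∀ b : {p // c p = false}, b ∉ nbrs r X → m b.1 = b.1 := by
    rintro ⟨p, hp⟩ hb
    have hp' : ¬ c p = true := by simp [hp]
    exact (dif_neg hp').trans (dif_neg hb)
  have hcase : ∀ p : P, (∃ a : {p // c p = true}, a.1 = p) ∨ ∃ b : {p // c p = false}, b.1 = p := by
    intro p
    by_cases hp : c p = true
    · exact Or.inl ⟨⟨p, hp⟩, rfl⟩
    · exact Or.inr ⟨⟨p, hfalse hp⟩, rfl⟩
  set C : Set P := Subtype.val '' X ∪ Subtype.val '' (nbrs r X)ᶜ with hCdef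
  have hcol : ∀ (a : {p // c p = true}) (b : {p // c p = false}), a.1 ≠ b.1 := by
    intro a b hab
    exact absurd (a.2.symm.trans (hab ▸ b.2)) (by simp)
  refine exists_fishbone_of_retraction (C := C) (m := m) ?_ ?_ ?_ ?_ ?_
  · have hcross : ∀ a ∈ X, ∀ b ∉ nbrs r X, a.1 ≤ b.1 ∨ b.1 ≤ a.1 := by
      intro a ha b hb
      by_contra! hcon
      exact hb ⟨a, ha, hcon⟩
    rintro _ (⟨a, ha, rfl⟩ | ⟨b, hb, rfl⟩) _ (⟨a', ha', rfl⟩ | ⟨b', hb', rfl⟩) -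
    · exact htot _ _ (a.2.trans a'.2.symm)
    · exact hcross a ha b' hb'
    · exact (hcross a' ha' b hb).symm
    · exact htot _ _ (b.2.trans b'.2.symm)
  · intro p
    rcases hcase p with ⟨a, rfl⟩ | ⟨b, rfl⟩
    · by_cases ha : a ∈ X
      · rw [hmX a ha]; exact Or.inl ⟨a, ha, rfl⟩
      · rw [hmf a ha]; exact Or.inr ⟨_, (hf ⟨a, ha⟩).1, rfl⟩
    · by_cases hb : b ∈ nbrs r X
      · rw [hmN b hb]; exact Or.inl ⟨_, (hh ⟨b, hb⟩).1, rfl⟩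
      · rw [hmB b hb]; exact Or.inr ⟨b, hb, rfl⟩
  · rintro _ (⟨a, ha, rfl⟩ | ⟨b, hb, rfl⟩)
    · exact hmX a ha
    · exact hmB b hb
  · intro p hp
    rcases hcase p with ⟨a, rfl⟩ | ⟨b, rfl⟩
    · have ha : a ∉ X := fun ha => hp (Or.inl ⟨a, ha, rfl⟩)
      rw [hmf a ha]
      exact (hf ⟨a, ha⟩).2
    · have hb : b ∈ nbrs r X := by_contra fun hb => hp (Or.inr ⟨b, hb, rfl⟩)
      rw [hmN b hb]
      exact ⟨(hh ⟨b, hb⟩).2.2, (hh ⟨b, hb⟩).2.1⟩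
  · intro p hp q hq hpq
    rcases hcase p with ⟨a, rfl⟩ | ⟨b, rfl⟩ <;> rcases hcase q with ⟨a', rfl⟩ | ⟨b', rfl⟩
    · have ha : a ∉ X := fun ha => hp (Or.inl ⟨a, ha, rfl⟩)
      have ha' : a' ∉ X := fun ha => hq (Or.inl ⟨a', ha, rfl⟩)
      rw [hmf a ha, hmf a' ha'] at hpq
      exact congrArg (fun x => x.1.1) (hfinj (Subtype.ext hpq))
    · have ha : a ∉ X := fun ha => hp (Or.inl ⟨a, ha, rfl⟩)
      have hb' : b' ∈ nbrs r X := by_contra fun hb => hq (Or.inr ⟨b', hb, rfl⟩)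
      rw [hmf a ha, hmN b' hb'] at hpq
      exact absurd hpq.symm (hcol _ _)
    · have hb : b ∈ nbrs r X := by_contra fun hb => hp (Or.inr ⟨b, hb, rfl⟩)
      have ha' : a' ∉ X := fun ha => hq (Or.inl ⟨a', ha, rfl⟩)
      rw [hmN b hb, hmf a' ha'] at hpq
      exact absurd hpq (hcol _ _)
    · have hb : b ∈ nbrs r X := by_contra fun hb => hp (Or.inr ⟨b, hb, rfl⟩)
      have hb' : b' ∈ nbrs r X := by_contra fun hb => hq (Or.inr ⟨b', hb, rfl⟩)
      rw [hmN b hb, hmN b' hb'] at hpq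
      exact congrArg (fun x => x.1.1) (hinj (Subtype.ext hpq))

end Dilworth

end Fishbone

/-- The `k = 2` case of the fish bone conjecture of Aharoni and Korman: if every
antichain of a (possibly infinite) poset `P` has at most 2 elements, then there are a
chain `C` and a partition `D` of the elements into antichains such that every
antichain of `D` meets `C`. -/
theorem fishbone_width_two {P : Type*} [PartialOrder P]
    (hwidth : ∀ T : Set P, IsAntichain (· ≤ ·) T → #(↥T) ≤ 2) :
    ∃ (C : Set P) (D : Set (Set P)),
      IsChain (· ≤ ·) C ∧
      Setoid.IsPartition D ∧
      (∀ T ∈ D, IsAntichain (· ≤ ·) T) ∧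
      (∀ T ∈ D, (T ∩ C).Nonempty) := by
  classical
  refine Fishbone.exists_fishbone fun x y z hxy hxz hyz => ?_
  have hT : IsAntichain (· ≤ ·) (({x, y, z} : Finset P) : Set P) := by
    simp only [Finset.coe_insert, Finset.coe_singleton]
    rintro a (rfl | rfl | rfl) b (rfl | rfl | rfl) hab
    · exact absurd rfl hab
    · exact hxy.1
    · exact hxz.1
    · exact hxy.2
    · exact absurd rfl hab
    · exact hyz.1
    · exact hxz.2
    · exact hyz.2
    · exact absurd rfl hab
  have h := hwidth _ hT
  have hcard : ({x, y, z} : Finset P).card = 3 := by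
    rw [Finset.card_eq_three]
    refine ⟨x, y, z, ?_, ?_, ?_, rfl⟩
    · rintro rfl; exact hxy.1 le_rfl
    · rintro rfl; exact hxz.1 le_rfl
    · rintro rfl; exact hyz.1 le_rfl
  rw [Finset.coe_sort_coe, Cardinal.mk_coe_finset, hcard] at h
  have : (3 : ℕ) ≤ 2 := by exact_mod_cast h
  omega
end
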